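/- Let n ≥ 0, ℓ ≥ 1, let κ ∈ Z^ℓ be any multicharge and let λ be an ℓ-multipartition of n. Then deg_e(λ) = Σ_{t∈Std(λ)} deg_e(t) ≥ 0 for every e ∈ {0, 2, 3, 4, …}, and Deg_p(λ) = Σ_{k≥1} deg_{p^k}(λ) ≥ 0 for every prime number p. -/

import Mathlib

open scoped BigOperators
open scoped Classical

namespace Paper

/-! ## Quantum integers -/

/-- The quantum integer `[d]_x` in a field, for `d ∈ ℤ`. -/
noncomputable def qint {K : Type*} [Field K] (x : K) (d : ℤ) : K :=
  if 0 ≤ d then ∑ k ∈ Finset.range d.toNat, x ^ k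
  else -∑ k ∈ Finset.range (-d).toNat, x ^ (-((k : ℤ) + 1))

/-- The quantum integer `[d]_t` in a commutative ring, for an invertible `t` and `d ∈ ℤ`. -/
def qintU {O : Type*} [CommRing O] (t : Oˣ) (d : ℤ) : O :=
  if 0 ≤ d then ∑ k ∈ Finset.range d.toNat, (t : O) ^ k
  else -∑ k ∈ Finset.range (-d).toNat, ((t ^ (-((k : ℤ) + 1)) : Oˣ) : O)

/-! ## Nodes, multipartitions and standard tableaux -/

/-- A node `(l, r, c)`: component `l`, row `r`, column `c` (all `0`-based). -/
abbrev Node : Type := ℕ × ℕ × ℕ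

/-- `nodeBelow A B` holds when `B` is strictly below `A`, i.e. `A < B` lexicographically. -/
def nodeBelow (A B : Node) : Prop :=
  A.1 < B.1 ∨ (A.1 = B.1 ∧ (A.2.1 < B.2.1 ∨ (A.2.1 = B.2.1 ∧ A.2.2 < B.2.2)))

/-- An `ℓ`-multipartition of `n`. -/
structure Multipartition (ℓ n : ℕ) : Type where
  part : ℕ → ℕ → ℕ
  comp_bound : ∀ l, ℓ ≤ l → ∀ r, part l r = 0
  antitone : ∀ l, Antitone (part l)
  row_bound : ∀ l r, n ≤ r → part l r = 0
  size : (∑ l ∈ Finset.range ℓ, ∑ r ∈ Finset.range n, part l r) = n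

/-- The diagram of a multipartition. -/
def Multipartition.diagram {ℓ n : ℕ} (μ : Multipartition ℓ n) : Set Node :=
  {A | A.2.2 < μ.part A.1 A.2.1}

/-- A standard tableau: a bijection from the diagram of its shape onto `{1, …, n}`
that increases along rows and down columns of each component (it takes the value
`0` off the diagram, so that it is determined by its entries). -/
structure StdTableau (ℓ n : ℕ) : Type where
  shape : Multipartition ℓ n
  entry : Node → ℕ
  entry_zero : ∀ A, A ∉ shape.diagram → entry A = 0
  bijOn : Set.BijOn entry shape.diagram (Set.Icc 1 n)
  row_inc : ∀ l r c, (l, r, c + 1) ∈ shape.diagram → entry (l, r, c) < entry (l, r, c + 1)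
  col_inc : ∀ l r c, (l, r + 1, c) ∈ shape.diagram → entry (l, r, c) < entry (l, r + 1, c)

/-- The node of a standard tableau containing the entry `k`. -/
noncomputable def StdTableau.node {ℓ n : ℕ} (T : StdTableau ℓ n) (k : ℕ) : Node :=
  Function.invFunOn T.entry T.shape.diagram k

/-- The content `c_k(T) = κ_l + c - r` of the entry `k` in the tableau `T`
(`1 ≤ k ≤ n`). -/
noncomputable def content {ℓ n : ℕ} (κ : ℕ → ℤ) (T : StdTableau ℓ n) (k : ℕ) : ℤ :=
  κ (T.node k).1 + ((T.node k).2.2 : ℤ) - ((T.node k).2.1 : ℤ)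

/-- The residue sequence of a standard tableau, in `I^n` with `I = ℤ/eℤ`. -/
noncomputable def resSeq {ℓ n : ℕ} (e : ℕ) (κ : ℕ → ℤ) (T : StdTableau ℓ n) :
    Fin n → ZMod e :=
  fun k => ((content κ T (k.1 + 1) : ℤ) : ZMod e)

/-- The residue of a node. -/
def resNode (e : ℕ) (κ : ℕ → ℤ) (A : Node) : ZMod e :=
  ((κ A.1 + (A.2.2 : ℤ) - (A.2.1 : ℤ) : ℤ) : ZMod e)

/-- A set of nodes is the diagram of a multipartition (with at most `ℓ` components)
iff it is finite and downward closed in rows and columns. -/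
def IsDiagramSet (ℓ : ℕ) (S : Set Node) : Prop :=
  S.Finite ∧ (∀ A ∈ S, A.1 < ℓ) ∧
    (∀ l r c, (l, r, c + 1) ∈ S → (l, r, c) ∈ S) ∧
    (∀ l r c, (l, r + 1, c) ∈ S → (l, r, c) ∈ S)

/-- `A` is an addable node of the diagram `S`. -/
def Addable (ℓ : ℕ) (S : Set Node) (A : Node) : Prop :=
  A ∉ S ∧ IsDiagramSet ℓ (S ∪ {A})

/-- `A` is a removable node of the diagram `S`. -/
def Removable (ℓ : ℕ) (S : Set Node) (A : Node) : Prop :=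
  A ∈ S ∧ IsDiagramSet ℓ (S \ {A})

/-- `d_A(S)`: the number of addable nodes of `S` of the same residue as `A` strictly
below `A`, minus the number of removable ones. -/
noncomputable def dNode (ℓ e : ℕ) (κ : ℕ → ℤ) (S : Set Node) (A : Node) : ℤ :=
  (Set.ncard {B | Addable ℓ S B ∧ resNode e κ B = resNode e κ A ∧ nodeBelow A B} : ℤ) -
    (Set.ncard {B | Removable ℓ S B ∧ resNode e κ B = resNode e κ A ∧ nodeBelow A B} : ℤ)

/-- The Brundan–Kleshchev–Wang degree `deg_e(T)` of a standard tableau, written as the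
telescoping sum of the recursion `deg_e(T) = deg_e(T↓(n-1)) + d_A(Shape(T))`. -/
noncomputable def degE {ℓ n : ℕ} (e : ℕ) (κ : ℕ → ℤ) (T : StdTableau ℓ n) : ℤ :=
  ∑ m ∈ Finset.Icc 1 n,
    dNode ℓ e κ {A | A ∈ T.shape.diagram ∧ T.entry A ≤ m} (T.node m)

/-- The restriction of the diagram of `T` to entries `≤ m` (the diagram of `Shape(T↓m)`). -/
def restDiag {ℓ n : ℕ} (T : StdTableau ℓ n) (m : ℕ) : Set Node :=
  {A | A ∈ T.shape.diagram ∧ T.entry A ≤ m}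

/-- Dominance order on standard tableaux: `domTab S T` iff `S ⊵ T`. -/
def domTab {ℓ n : ℕ} (S T : StdTableau ℓ n) : Prop :=
  ∀ m l i : ℕ,
    Set.ncard {A | A ∈ restDiag T m ∧ (A.1 < l ∨ (A.1 = l ∧ A.2.1 ≤ i))} ≤
      Set.ncard {A | A ∈ restDiag S m ∧ (A.1 < l ∨ (A.1 = l ∧ A.2.1 ≤ i))}

/-- Interchange the entries `r` and `r + 1` in an entry function. -/
def swapEntry (f : Node → ℕ) (r : ℕ) : Node → ℕ :=
  fun A => if f A = r then r + 1 else if f A = r + 1 then r else f A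

/-- `ρ_r(T) = c_r(T) - c_{r+1}(T)`, the axial distance. -/
noncomputable def rhoTab {ℓ n : ℕ} (κ : ℕ → ℤ) (T : StdTableau ℓ n) (r : ℕ) : ℤ :=
  content κ T r - content κ T (r + 1)

/-- The entry function of the row-reading initial tableau `t^λ`. -/
noncomputable def tlamEntry {ℓ n : ℕ} (μ : Multipartition ℓ n) (A : Node) : ℕ :=
  if A ∈ μ.diagram then
    (∑ l ∈ Finset.range A.1, ∑ r ∈ Finset.range n, μ.part l r) +
      (∑ r ∈ Finset.range A.2.1, μ.part A.1 r) + A.2.2 + 1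
  else 0

/-- The finite set of possible contents of standard tableaux of size `n`. -/
noncomputable def contFinset (ℓ n : ℕ) (κ : ℕ → ℤ) : Finset ℤ :=
  ((Finset.range ℓ ×ˢ Finset.range n ×ˢ Finset.range n).image
      (fun x => κ x.1 + (x.2.2 : ℤ) - (x.2.1 : ℤ))).filter
    (fun c => ∃ T : StdTableau ℓ n, ∃ k, 1 ≤ k ∧ k ≤ n ∧ content κ T k = c)

/-- The standard tableau (if any) obtained from `T` by interchanging the entries
`r` and `r + 1`; i.e. `T·s_r` if it is standard, and `none` otherwise. -/
noncomputable def oSwapO {ℓ n : ℕ} (T : StdTableau ℓ n) (r : ℕ) :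
    Option (StdTableau ℓ n) :=
  if h : ∃ V : StdTableau ℓ n, V.entry = swapEntry T.entry r then some (Classical.choose h)
  else none

/-- `oSwap` extended to `Option`. -/
noncomputable def oSwap {ℓ n : ℕ} (X : Option (StdTableau ℓ n)) (r : ℕ) :
    Option (StdTableau ℓ n) :=
  X.bind fun T => oSwapO T r

/-- Evaluate a seminormal coefficient system on an optional tableau (by `0` if none). -/
noncomputable def aE {ℓ n : ℕ} {K : Type*} [Field K] (α : ℕ → StdTableau ℓ n → K) (r : ℕ)
    (X : Option (StdTableau ℓ n)) : K :=
  X.elim 0 (α r)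

/-! ## Separation and idempotent subrings -/

/-- `(K, t)` separates `Std(P_n)` (field version):
`[n]!_t ∏_{1 ≤ l < m ≤ ℓ} ∏_{-n < d < n} [κ_l - κ_m + d]_t ≠ 0`. -/
def SeparatesF {K : Type*} [Field K] (t : Kˣ) (n ℓ : ℕ) (κ : ℕ → ℤ) : Prop :=
  ((∏ d ∈ Finset.Icc 1 n, qint (t : K) (d : ℤ)) *
      ∏ l ∈ Finset.range ℓ, ∏ m ∈ Finset.Ioo l ℓ,
        ∏ d ∈ Finset.Ioo (-(n : ℤ)) (n : ℤ), qint (t : K) (κ l - κ m + d)) ≠ 0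

/-- `(O, t)` separates `Std(P_n)` (subring version): the separation element is a unit. -/
def SeparatesU {O : Type*} [CommRing O] (t : Oˣ) (n ℓ : ℕ) (κ : ℕ → ℤ) : Prop :=
  IsUnit ((∏ d ∈ Finset.Icc 1 n, qintU t (d : ℤ)) *
      ∏ l ∈ Finset.range ℓ, ∏ m ∈ Finset.Ioo l ℓ,
        ∏ d ∈ Finset.Ioo (-(n : ℤ)) (n : ℤ), qintU t (κ l - κ m + d))

/-- `(O, t)` is an `e`-idempotent subring of the field `K`. -/
def IsIdempotentSubring {K : Type*} [Field K] (O : Subring K) (t : Oˣ) (e n ℓ : ℕ)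
    (κ : ℕ → ℤ) : Prop :=
  SeparatesU t n ℓ κ ∧
    (∀ k : ℤ, ¬(e : ℤ) ∣ k → IsUnit (qintU t k)) ∧
    (∀ k : ℤ, (e : ℤ) ∣ k → qintU t k ∈ Ideal.jacobson (⊥ : Ideal O))

/-! ## The cyclotomic Hecke algebra, by generators and relations -/

/-- Generators `L_1, …, L_n`, `T_1, …, T_{n-1}` (here `0`-based). -/
inductive HeckeGen (n : ℕ) : Type
  | L : Fin n → HeckeGen n
  | T : Fin (n - 1) → HeckeGen n

/-- The position `r` of the pair `(r, r+1)` interchanged by the `r`-th transposition. -/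
def pL {n : ℕ} (r : Fin (n - 1)) : Fin n := ⟨r.1, by have := r.2; omega⟩

/-- The position `r + 1` of the pair interchanged by the `r`-th transposition. -/
def pR {n : ℕ} (r : Fin (n - 1)) : Fin n := ⟨r.1 + 1, by have := r.2; omega⟩

/-- The position `r + 2`, used in braid relations. -/
def pM {n : ℕ} (r : Fin (n - 1)) (hr : r.1 + 1 < n - 1) : Fin n := ⟨r.1 + 2, by omega⟩

/-- The free algebra generator `L_k`. -/
def hL (R : Type*) [CommRing R] {n : ℕ} (k : Fin n) : FreeAlgebra R (HeckeGen n) :=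
  FreeAlgebra.ι R (HeckeGen.L k)

/-- The free algebra generator `T_r`. -/
def hT (R : Type*) [CommRing R] {n : ℕ} (r : Fin (n - 1)) : FreeAlgebra R (HeckeGen n) :=
  FreeAlgebra.ι R (HeckeGen.T r)

/-- The defining relations of the integral cyclotomic Hecke algebra `H_n(R, t, κ)`. -/
inductive HeckeRel (R : Type*) [CommRing R] (t : Rˣ) (n ℓ : ℕ) (κ : ℕ → ℤ) :
    FreeAlgebra R (HeckeGen n) → FreeAlgebra R (HeckeGen n) → Prop
  | cyc (h : 0 < n) :
      HeckeRel R t n ℓ κ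
        (((List.range ℓ).map fun l =>
          hL R (⟨0, h⟩ : Fin n) - algebraMap R _ (qintU t (κ l))).prod) 0
  | quad (r : Fin (n - 1)) :
      HeckeRel R t n ℓ κ ((hT R r + 1) * (hT R r - algebraMap R _ (t : R))) 0
  | LL (k m : Fin n) : HeckeRel R t n ℓ κ (hL R k * hL R m) (hL R m * hL R k)
  | TTfar (r s : Fin (n - 1)) (h : r.1 + 1 < s.1 ∨ s.1 + 1 < r.1) :
      HeckeRel R t n ℓ κ (hT R r * hT R s) (hT R s * hT R r)
  | braid (r s : Fin (n - 1)) (h : s.1 = r.1 + 1) :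
      HeckeRel R t n ℓ κ (hT R r * hT R s * hT R r) (hT R s * hT R r * hT R s)
  | TL (r : Fin (n - 1)) (k : Fin n) (h : k.1 ≠ r.1 ∧ k.1 ≠ r.1 + 1) :
      HeckeRel R t n ℓ κ (hT R r * hL R k) (hL R k * hT R r)
  | LT (r : Fin (n - 1)) :
      HeckeRel R t n ℓ κ (hL R (pR r) * (hT R r - algebraMap R _ (t : R) + 1))
        (hT R r * hL R (pL r) + 1)

/-- The integral cyclotomic Hecke algebra of type `A`, `H_n(R, t, κ)`. -/
noncomputable abbrev CycHecke (R : Type*) [CommRing R] (t : Rˣ) (n ℓ : ℕ) (κ : ℕ → ℤ) :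
    Type _ :=
  RingQuot (HeckeRel R t n ℓ κ)

/-- The generator `L_k` of the cyclotomic Hecke algebra. -/
noncomputable def Lgen (R : Type*) [CommRing R] (t : Rˣ) (n ℓ : ℕ) (κ : ℕ → ℤ)
    (k : Fin n) : CycHecke R t n ℓ κ :=
  RingQuot.mkAlgHom R (HeckeRel R t n ℓ κ) (hL R k)

/-- The generator `T_r` of the cyclotomic Hecke algebra. -/
noncomputable def Tgen (R : Type*) [CommRing R] (t : Rˣ) (n ℓ : ℕ) (κ : ℕ → ℤ)
    (r : Fin (n - 1)) : CycHecke R t n ℓ κ :=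
  RingQuot.mkAlgHom R (HeckeRel R t n ℓ κ) (hT R r)

end Paper
/-! ## Quiver Hecke (KLR) algebras, by generators and relations -/

namespace Paper

/-- Generators `e(i)` (`i ∈ I^n`), `ψ_1, …, ψ_{n-1}`, `y_1, …, y_n` (here `0`-based). -/
inductive KLRGen (n e : ℕ) : Type
  | idem : (Fin n → ZMod e) → KLRGen n e
  | psi : Fin (n - 1) → KLRGen n e
  | y : Fin n → KLRGen n e

/-- The free algebra generator `e(i)`. -/
def kE (R : Type*) [CommRing R] {n e : ℕ} (i : Fin n → ZMod e) :
    FreeAlgebra R (KLRGen n e) :=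
  FreeAlgebra.ι R (KLRGen.idem i)

/-- The free algebra generator `ψ_r`. -/
def kPsi (R : Type*) [CommRing R] {n e : ℕ} (r : Fin (n - 1)) :
    FreeAlgebra R (KLRGen n e) :=
  FreeAlgebra.ι R (KLRGen.psi r)

/-- The free algebra generator `y_k`. -/
def kY (R : Type*) [CommRing R] {n e : ℕ} (k : Fin n) : FreeAlgebra R (KLRGen n e) :=
  FreeAlgebra.ι R (KLRGen.y k)

/-- `s_r · i`: interchange the entries of `i` at positions `r` and `r + 1`. -/
def swapSeq {n e : ℕ} (i : Fin n → ZMod e) (r : Fin (n - 1)) : Fin n → ZMod e :=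
  fun k => if k = pL r then i (pR r) else if k = pR r then i (pL r) else i k

/-- The defining relations of the cyclotomic quiver Hecke algebra `R_n^Λ(R)` where
`Λ = Σ_l Λ_{κ_l mod e}`. -/
inductive KLRRel (R : Type*) [CommRing R] (n e ℓ : ℕ) [NeZero e] (κ : ℕ → ℤ) :
    FreeAlgebra R (KLRGen n e) → FreeAlgebra R (KLRGen n e) → Prop
  | cyc (h : 0 < n) (i : Fin n → ZMod e) :
      KLRRel R n e ℓ κ
        ((kY R (⟨0, h⟩ : Fin n)) ^
            (((Finset.range ℓ).filter fun l => ((κ l : ZMod e) = i ⟨0, h⟩)).card) *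
          kE R i) 0
  | orth (i j : Fin n → ZMod e) (h : i ≠ j) : KLRRel R n e ℓ κ (kE R i * kE R j) 0
  | idem (i : Fin n → ZMod e) : KLRRel R n e ℓ κ (kE R i * kE R i) (kE R i)
  | complete : KLRRel R n e ℓ κ (∑ i : Fin n → ZMod e, kE R i) 1
  | yE (k : Fin n) (i : Fin n → ZMod e) :
      KLRRel R n e ℓ κ (kY R k * kE R i) (kE R i * kY R k)
  | psiE (r : Fin (n - 1)) (i : Fin n → ZMod e) :
      KLRRel R n e ℓ κ (kPsi R r * kE R i) (kE R (swapSeq i r) * kPsi R r)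
  | yy (k m : Fin n) : KLRRel R n e ℓ κ (kY R k * kY R m) (kY R m * kY R k)
  | psiyEq (r : Fin (n - 1)) (i : Fin n → ZMod e) (h : i (pL r) = i (pR r)) :
      KLRRel R n e ℓ κ (kPsi R r * kY R (pR r) * kE R i)
        ((kY R (pL r) * kPsi R r + 1) * kE R i)
  | psiyNe (r : Fin (n - 1)) (i : Fin n → ZMod e) (h : i (pL r) ≠ i (pR r)) :
      KLRRel R n e ℓ κ (kPsi R r * kY R (pR r) * kE R i)
        (kY R (pL r) * kPsi R r * kE R i)
  | ypsiEq (r : Fin (n - 1)) (i : Fin n → ZMod e) (h : i (pL r) = i (pR r)) :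
      KLRRel R n e ℓ κ (kY R (pR r) * kPsi R r * kE R i)
        ((kPsi R r * kY R (pL r) + 1) * kE R i)
  | ypsiNe (r : Fin (n - 1)) (i : Fin n → ZMod e) (h : i (pL r) ≠ i (pR r)) :
      KLRRel R n e ℓ κ (kY R (pR r) * kPsi R r * kE R i)
        (kPsi R r * kY R (pL r) * kE R i)
  | psiyFar (r : Fin (n - 1)) (k : Fin n) (h : k.1 ≠ r.1 ∧ k.1 ≠ r.1 + 1) :
      KLRRel R n e ℓ κ (kPsi R r * kY R k) (kY R k * kPsi R r)
  | psipsiFar (r s : Fin (n - 1)) (h : r.1 + 1 < s.1 ∨ s.1 + 1 < r.1) :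
      KLRRel R n e ℓ κ (kPsi R r * kPsi R s) (kPsi R s * kPsi R r)
  | quadEq (r : Fin (n - 1)) (i : Fin n → ZMod e) (h : i (pL r) = i (pR r)) :
      KLRRel R n e ℓ κ (kPsi R r ^ 2 * kE R i) 0
  | quadR (r : Fin (n - 1)) (i : Fin n → ZMod e)
      (h1 : i (pR r) = i (pL r) + 1) (h2 : i (pL r) ≠ i (pR r) + 1) :
      KLRRel R n e ℓ κ (kPsi R r ^ 2 * kE R i) ((kY R (pL r) - kY R (pR r)) * kE R i)
  | quadL (r : Fin (n - 1)) (i : Fin n → ZMod e)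
      (h1 : i (pL r) = i (pR r) + 1) (h2 : i (pR r) ≠ i (pL r) + 1) :
      KLRRel R n e ℓ κ (kPsi R r ^ 2 * kE R i) ((kY R (pR r) - kY R (pL r)) * kE R i)
  | quadBoth (r : Fin (n - 1)) (i : Fin n → ZMod e)
      (h1 : i (pR r) = i (pL r) + 1) (h2 : i (pL r) = i (pR r) + 1) :
      KLRRel R n e ℓ κ (kPsi R r ^ 2 * kE R i)
        ((kY R (pR r) - kY R (pL r)) * (kY R (pL r) - kY R (pR r)) * kE R i)
  | quadNone (r : Fin (n - 1)) (i : Fin n → ZMod e) (h1 : i (pL r) ≠ i (pR r))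
      (h2 : i (pR r) ≠ i (pL r) + 1) (h3 : i (pL r) ≠ i (pR r) + 1) :
      KLRRel R n e ℓ κ (kPsi R r ^ 2 * kE R i) (kE R i)
  | braidR (r : Fin (n - 1)) (hr : r.1 + 1 < n - 1) (i : Fin n → ZMod e)
      (h0 : i (pM r hr) = i (pL r)) (h1 : i (pR r) = i (pL r) + 1)
      (h2 : i (pL r) ≠ i (pR r) + 1) :
      KLRRel R n e ℓ κ (kPsi R r * kPsi R ⟨r.1 + 1, hr⟩ * kPsi R r * kE R i)
        ((kPsi R ⟨r.1 + 1, hr⟩ * kPsi R r * kPsi R ⟨r.1 + 1, hr⟩ - 1) * kE R i)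
  | braidL (r : Fin (n - 1)) (hr : r.1 + 1 < n - 1) (i : Fin n → ZMod e)
      (h0 : i (pM r hr) = i (pL r)) (h1 : i (pL r) = i (pR r) + 1)
      (h2 : i (pR r) ≠ i (pL r) + 1) :
      KLRRel R n e ℓ κ (kPsi R r * kPsi R ⟨r.1 + 1, hr⟩ * kPsi R r * kE R i)
        ((kPsi R ⟨r.1 + 1, hr⟩ * kPsi R r * kPsi R ⟨r.1 + 1, hr⟩ + 1) * kE R i)
  | braidBoth (r : Fin (n - 1)) (hr : r.1 + 1 < n - 1) (i : Fin n → ZMod e)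
      (h0 : i (pM r hr) = i (pL r)) (h1 : i (pR r) = i (pL r) + 1)
      (h2 : i (pL r) = i (pR r) + 1) :
      KLRRel R n e ℓ κ (kPsi R r * kPsi R ⟨r.1 + 1, hr⟩ * kPsi R r * kE R i)
        ((kPsi R ⟨r.1 + 1, hr⟩ * kPsi R r * kPsi R ⟨r.1 + 1, hr⟩ +
            kY R (pL r) - 2 * kY R (pR r) + kY R (pM r hr)) * kE R i)
  | braidNone (r : Fin (n - 1)) (hr : r.1 + 1 < n - 1) (i : Fin n → ZMod e)
      (h : ¬(i (pM r hr) = i (pL r) ∧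
        (i (pR r) = i (pL r) + 1 ∨ i (pL r) = i (pR r) + 1))) :
      KLRRel R n e ℓ κ (kPsi R r * kPsi R ⟨r.1 + 1, hr⟩ * kPsi R r * kE R i)
        (kPsi R ⟨r.1 + 1, hr⟩ * kPsi R r * kPsi R ⟨r.1 + 1, hr⟩ * kE R i)

/-- The cyclotomic quiver Hecke algebra `R_n^Λ(R)`, `Λ = Σ_l Λ_{κ_l mod e}`. -/
noncomputable abbrev KLR (R : Type*) [CommRing R] (n e ℓ : ℕ) [NeZero e] (κ : ℕ → ℤ) :
    Type _ :=
  RingQuot (KLRRel R n e ℓ κ)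

/-- The generator `e(i)` of the cyclotomic quiver Hecke algebra. -/
noncomputable def KeGen (R : Type*) [CommRing R] (n e ℓ : ℕ) [NeZero e] (κ : ℕ → ℤ)
    (i : Fin n → ZMod e) : KLR R n e ℓ κ :=
  RingQuot.mkAlgHom R (KLRRel R n e ℓ κ) (kE R i)

/-- The generator `ψ_r` of the cyclotomic quiver Hecke algebra. -/
noncomputable def KpsiGen (R : Type*) [CommRing R] (n e ℓ : ℕ) [NeZero e] (κ : ℕ → ℤ)
    (r : Fin (n - 1)) : KLR R n e ℓ κ :=
  RingQuot.mkAlgHom R (KLRRel R n e ℓ κ) (kPsi R r)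

/-- The generator `y_k` of the cyclotomic quiver Hecke algebra. -/
noncomputable def KyGen (R : Type*) [CommRing R] (n e ℓ : ℕ) [NeZero e] (κ : ℕ → ℤ)
    (k : Fin n) : KLR R n e ℓ κ :=
  RingQuot.mkAlgHom R (KLRRel R n e ℓ κ) (kY R k)

end Paper
/-! ## The deformed cyclotomic quiver Hecke algebra -/

namespace Paper

/-- `y_k^⟨d⟩ = t^d y_k + [d]_t` in the free algebra. -/
def ydot (R : Type*) [CommRing R] (t : Rˣ) {n e : ℕ} (d : ℤ) (k : Fin n) :
    FreeAlgebra R (KLRGen n e) :=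
  algebraMap R _ ((t ^ d : Rˣ) : R) * kY R k + algebraMap R _ (qintU t d)

/-- `ρ_r(i) = î_r - î_{r+1}` for `i ∈ I^n`. -/
def rhoI {n e : ℕ} (i : Fin n → ZMod e) (r : Fin (n - 1)) : ℤ :=
  ((i (pL r)).val : ℤ) - ((i (pR r)).val : ℤ)

/-- The defining relations of the deformed cyclotomic quiver Hecke algebra `R_n(O)`. -/
inductive DefKLRRel (R : Type*) [CommRing R] (t : Rˣ) (n e ℓ : ℕ) [NeZero e] (κ : ℕ → ℤ) :
    FreeAlgebra R (KLRGen n e) → FreeAlgebra R (KLRGen n e) → Prop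
  | cyc (h : 0 < n) (i : Fin n → ZMod e) :
      DefKLRRel R t n e ℓ κ
        ((((List.range ℓ).map fun l =>
            if ((κ l : ZMod e) = i ⟨0, h⟩) then
              kY R (⟨0, h⟩ : Fin n) -
                algebraMap R _ (qintU t (κ l - ((i ⟨0, h⟩).val : ℤ)))
            else 1).prod) * kE R i) 0
  | orth (i j : Fin n → ZMod e) (h : i ≠ j) : DefKLRRel R t n e ℓ κ (kE R i * kE R j) 0
  | idem (i : Fin n → ZMod e) : DefKLRRel R t n e ℓ κ (kE R i * kE R i) (kE R i)
  | complete : DefKLRRel R t n e ℓ κ (∑ i : Fin n → ZMod e, kE R i) 1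
  | yE (k : Fin n) (i : Fin n → ZMod e) :
      DefKLRRel R t n e ℓ κ (kY R k * kE R i) (kE R i * kY R k)
  | psiE (r : Fin (n - 1)) (i : Fin n → ZMod e) :
      DefKLRRel R t n e ℓ κ (kPsi R r * kE R i) (kE R (swapSeq i r) * kPsi R r)
  | yy (k m : Fin n) : DefKLRRel R t n e ℓ κ (kY R k * kY R m) (kY R m * kY R k)
  | psiyEq (r : Fin (n - 1)) (i : Fin n → ZMod e) (h : i (pL r) = i (pR r)) :
      DefKLRRel R t n e ℓ κ (kPsi R r * kY R (pR r) * kE R i)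
        ((kY R (pL r) * kPsi R r + 1) * kE R i)
  | psiyNe (r : Fin (n - 1)) (i : Fin n → ZMod e) (h : i (pL r) ≠ i (pR r)) :
      DefKLRRel R t n e ℓ κ (kPsi R r * kY R (pR r) * kE R i)
        (kY R (pL r) * kPsi R r * kE R i)
  | ypsiEq (r : Fin (n - 1)) (i : Fin n → ZMod e) (h : i (pL r) = i (pR r)) :
      DefKLRRel R t n e ℓ κ (kY R (pR r) * kPsi R r * kE R i)
        ((kPsi R r * kY R (pL r) + 1) * kE R i)
  | ypsiNe (r : Fin (n - 1)) (i : Fin n → ZMod e) (h : i (pL r) ≠ i (pR r)) :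
      DefKLRRel R t n e ℓ κ (kY R (pR r) * kPsi R r * kE R i)
        (kPsi R r * kY R (pL r) * kE R i)
  | psiyFar (r : Fin (n - 1)) (k : Fin n) (h : k.1 ≠ r.1 ∧ k.1 ≠ r.1 + 1) :
      DefKLRRel R t n e ℓ κ (kPsi R r * kY R k) (kY R k * kPsi R r)
  | psipsiFar (r s : Fin (n - 1)) (h : r.1 + 1 < s.1 ∨ s.1 + 1 < r.1) :
      DefKLRRel R t n e ℓ κ (kPsi R r * kPsi R s) (kPsi R s * kPsi R r)
  | quadEq (r : Fin (n - 1)) (i : Fin n → ZMod e) (h : i (pL r) = i (pR r)) :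
      DefKLRRel R t n e ℓ κ (kPsi R r ^ 2 * kE R i) 0
  | quadR (r : Fin (n - 1)) (i : Fin n → ZMod e)
      (h1 : i (pR r) = i (pL r) + 1) (h2 : i (pL r) ≠ i (pR r) + 1) :
      DefKLRRel R t n e ℓ κ (kPsi R r ^ 2 * kE R i)
        ((ydot R t (1 + rhoI i r) (pL r) - kY R (pR r)) * kE R i)
  | quadL (r : Fin (n - 1)) (i : Fin n → ZMod e)
      (h1 : i (pL r) = i (pR r) + 1) (h2 : i (pR r) ≠ i (pL r) + 1) :
      DefKLRRel R t n e ℓ κ (kPsi R r ^ 2 * kE R i)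
        ((ydot R t (1 - rhoI i r) (pR r) - kY R (pL r)) * kE R i)
  | quadBoth (r : Fin (n - 1)) (i : Fin n → ZMod e)
      (h1 : i (pR r) = i (pL r) + 1) (h2 : i (pL r) = i (pR r) + 1) :
      DefKLRRel R t n e ℓ κ (kPsi R r ^ 2 * kE R i)
        ((ydot R t (1 + rhoI i r) (pL r) - kY R (pR r)) *
          (ydot R t (1 - rhoI i r) (pR r) - kY R (pL r)) * kE R i)
  | quadNone (r : Fin (n - 1)) (i : Fin n → ZMod e) (h1 : i (pL r) ≠ i (pR r))
      (h2 : i (pR r) ≠ i (pL r) + 1) (h3 : i (pL r) ≠ i (pR r) + 1) :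
      DefKLRRel R t n e ℓ κ (kPsi R r ^ 2 * kE R i) (kE R i)
  | braidBoth (r : Fin (n - 1)) (hr : r.1 + 1 < n - 1) (i : Fin n → ZMod e)
      (h0 : i (pM r hr) = i (pL r)) (h1 : i (pR r) = i (pL r) + 1)
      (h2 : i (pL r) = i (pR r) + 1) :
      DefKLRRel R t n e ℓ κ
        ((kPsi R r * kPsi R ⟨r.1 + 1, hr⟩ * kPsi R r -
            kPsi R ⟨r.1 + 1, hr⟩ * kPsi R r * kPsi R ⟨r.1 + 1, hr⟩) * kE R i)
        ((ydot R t (1 + rhoI i r) (pL r) + ydot R t (1 + rhoI i r) (pM r hr) -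
            ydot R t (1 + rhoI i r) (pR r) - ydot R t (1 - rhoI i r) (pR r)) * kE R i)
  | braidR (r : Fin (n - 1)) (hr : r.1 + 1 < n - 1) (i : Fin n → ZMod e)
      (h0 : i (pM r hr) = i (pL r)) (h1 : i (pR r) = i (pL r) + 1)
      (h2 : i (pL r) ≠ i (pR r) + 1) :
      DefKLRRel R t n e ℓ κ
        ((kPsi R r * kPsi R ⟨r.1 + 1, hr⟩ * kPsi R r -
            kPsi R ⟨r.1 + 1, hr⟩ * kPsi R r * kPsi R ⟨r.1 + 1, hr⟩) * kE R i)
        (algebraMap R _ (-(((t ^ (1 + rhoI i r) : Rˣ) : R))) * kE R i)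
  | braidL (r : Fin (n - 1)) (hr : r.1 + 1 < n - 1) (i : Fin n → ZMod e)
      (h0 : i (pM r hr) = i (pL r)) (h1 : i (pL r) = i (pR r) + 1)
      (h2 : i (pR r) ≠ i (pL r) + 1) :
      DefKLRRel R t n e ℓ κ
        ((kPsi R r * kPsi R ⟨r.1 + 1, hr⟩ * kPsi R r -
            kPsi R ⟨r.1 + 1, hr⟩ * kPsi R r * kPsi R ⟨r.1 + 1, hr⟩) * kE R i)
        (kE R i)
  | braidNone (r : Fin (n - 1)) (hr : r.1 + 1 < n - 1) (i : Fin n → ZMod e)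
      (h : ¬(i (pM r hr) = i (pL r) ∧
        (i (pR r) = i (pL r) + 1 ∨ i (pL r) = i (pR r) + 1))) :
      DefKLRRel R t n e ℓ κ
        ((kPsi R r * kPsi R ⟨r.1 + 1, hr⟩ * kPsi R r -
            kPsi R ⟨r.1 + 1, hr⟩ * kPsi R r * kPsi R ⟨r.1 + 1, hr⟩) * kE R i) 0

/-- The deformed cyclotomic quiver Hecke algebra `R_n(R)`. -/
noncomputable abbrev DefKLR (R : Type*) [CommRing R] (t : Rˣ) (n e ℓ : ℕ) [NeZero e]
    (κ : ℕ → ℤ) : Type _ :=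
  RingQuot (DefKLRRel R t n e ℓ κ)

/-- The generator `f_i` of the deformed cyclotomic quiver Hecke algebra. -/
noncomputable def DfGen (R : Type*) [CommRing R] (t : Rˣ) (n e ℓ : ℕ) [NeZero e]
    (κ : ℕ → ℤ) (i : Fin n → ZMod e) : DefKLR R t n e ℓ κ :=
  RingQuot.mkAlgHom R (DefKLRRel R t n e ℓ κ) (kE R i)

/-- The generator `ψ_r` of the deformed cyclotomic quiver Hecke algebra. -/
noncomputable def DpsiGen (R : Type*) [CommRing R] (t : Rˣ) (n e ℓ : ℕ) [NeZero e]
    (κ : ℕ → ℤ) (r : Fin (n - 1)) : DefKLR R t n e ℓ κ :=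
  RingQuot.mkAlgHom R (DefKLRRel R t n e ℓ κ) (kPsi R r)

/-- The generator `y_k` of the deformed cyclotomic quiver Hecke algebra. -/
noncomputable def DyGen (R : Type*) [CommRing R] (t : Rˣ) (n e ℓ : ℕ) [NeZero e]
    (κ : ℕ → ℤ) (k : Fin n) : DefKLR R t n e ℓ κ :=
  RingQuot.mkAlgHom R (DefKLRRel R t n e ℓ κ) (kY R k)

/-! ## Seminormal idempotents -/

/-- The seminormal idempotent `F_T` of the semisimple cyclotomic Hecke algebra:
`F_T = ∏_{k=1}^n ∏_{c ∈ Cont(n), [c_k(T)] ≠ [c]} (L_k - [c]) / ([c_k(T)] - [c])`. -/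
noncomputable def Fidem (K : Type*) [Field K] (tK : Kˣ) (n ℓ : ℕ) (κ : ℕ → ℤ)
    (T : StdTableau ℓ n) : CycHecke K tK n ℓ κ :=
  ((List.finRange n).map (fun k =>
    (((contFinset ℓ n κ).sort (· ≤ ·)).map (fun c =>
      if qint (tK : K) (content κ T (k.1 + 1)) ≠ qint (tK : K) c then
        (Lgen K tK n ℓ κ k - algebraMap K _ (qint (tK : K) c)) *
          algebraMap K _ ((qint (tK : K) (content κ T (k.1 + 1)) - qint (tK : K) c)⁻¹)
      else 1)).prod)).prod

/-- The residue idempotent `f_i = Σ_{T ∈ Std(i)} F_T`. -/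
noncomputable def fres (K : Type*) [Field K] (tK : Kˣ) (n ℓ e : ℕ) (κ : ℕ → ℤ)
    (i : Fin n → ZMod e) : CycHecke K tK n ℓ κ :=
  ∑ᶠ T : {T : StdTableau ℓ n // resSeq e κ T = i}, Fidem K tK n ℓ κ T.1

/-- The simultaneous two-sided eigenspace `H_{S,T}` of the Jucys–Murphy elements. -/
noncomputable def eigSub (K : Type*) [Field K] (tK : Kˣ) (n ℓ : ℕ) (κ : ℕ → ℤ)
    (S T : StdTableau ℓ n) : Submodule K (CycHecke K tK n ℓ κ) where
  carrier := {h | ∀ k : Fin n,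
      Lgen K tK n ℓ κ k * h = qint (tK : K) (content κ S (k.1 + 1)) • h ∧
      h * Lgen K tK n ℓ κ k = qint (tK : K) (content κ T (k.1 + 1)) • h}
  add_mem' := by
    intro a b ha hb
    intro k
    obtain ⟨h1, h2⟩ := ha k
    obtain ⟨h3, h4⟩ := hb k
    exact ⟨by rw [mul_add, h1, h3, smul_add], by rw [add_mul, h2, h4, smul_add]⟩
  zero_mem' := by intro k; simp
  smul_mem' := by
    intro c a ha
    intro k
    obtain ⟨h1, h2⟩ := ha k
    constructor
    · rw [mul_smul_comm, h1, smul_comm]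
    · rw [smul_mul_assoc, h2, smul_comm]

end Paper

namespace Paper

/-! ### Finite generation of the Hecke algebra image -/

section FG

variable {O E : Type*} [CommRing O] [Ring E] [Algebra O E]

/-- The `O`-submodules spanned by words in `T 0, …, T (k-1)`. -/
def heckeSpan (O : Type*) {E : Type*} [CommRing O] [Ring E] [Algebra O E] (T : ℕ → E) :
    ℕ → Submodule O E
  | 0 => 1
  | k + 1 => heckeSpan O T k ⊔ heckeSpan O T k * (Submodule.span O {T k}) * heckeSpan O T k

theorem heckeSpan_fg (T : ℕ → E) (k : ℕ) : (heckeSpan O T k).FG := by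
  induction k with
  | zero => rw [heckeSpan, Submodule.one_eq_span]; exact Submodule.fg_span_singleton _
  | succ k ih =>
    exact Submodule.FG.sup ih ((ih.mul (Submodule.fg_span_singleton _)).mul ih)

theorem heckeSpan_le_succ (T : ℕ → E) (k : ℕ) : heckeSpan O T k ≤ heckeSpan O T (k + 1) :=
  le_sup_left

theorem one_mem_heckeSpan (T : ℕ → E) (k : ℕ) : (1 : E) ∈ heckeSpan O T k := by
  induction k with
  | zero => exact Submodule.one_le.mp le_rfl
  | succ k ih => exact heckeSpan_le_succ T k ih

theorem mid_mem_heckeSpan (T : ℕ → E) (k : ℕ) {u v : E} (hu : u ∈ heckeSpan O T k)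
    (hv : v ∈ heckeSpan O T k) : u * T k * v ∈ heckeSpan O T (k + 1) :=
  Submodule.mem_sup_right (Submodule.mul_mem_mul (Submodule.mul_mem_mul hu
    (Submodule.mem_span_singleton_self _)) hv)

theorem gen_mem_heckeSpan (T : ℕ → E) (k : ℕ) : T k ∈ heckeSpan O T (k + 1) := by
  have := mid_mem_heckeSpan (O := O) T k (one_mem_heckeSpan T k) (one_mem_heckeSpan T k)
  simpa using this

theorem gen_mem_heckeSpan' (T : ℕ → E) (k j : ℕ) (h : j < k) : T j ∈ heckeSpan O T k := by
  induction k with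
  | zero => omega
  | succ k ih =>
    rcases Nat.lt_succ_iff_lt_or_eq.mp h with h | rfl
    · exact heckeSpan_le_succ T k (ih h)
    · exact gen_mem_heckeSpan T _

/-- Induction principle. -/
theorem heckeSpan_succ_induction (T : ℕ → E) (k : ℕ) {p : E → Prop}
    (h0 : ∀ u ∈ heckeSpan O T k, p u)
    (h1 : ∀ u ∈ heckeSpan O T k, ∀ v ∈ heckeSpan O T k, p (u * T k * v))
    (hadd : ∀ u v, p u → p v → p (u + v)) (w : E) (hw : w ∈ heckeSpan O T (k + 1)) : p w := by
  obtain ⟨y, hy, z, hz, rfl⟩ := Submodule.mem_sup.mp hw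
  refine hadd _ _ (h0 y hy) ?_
  refine Submodule.mul_induction_on hz ?_ hadd
  intro m hm n hn
  refine Submodule.mul_induction_on (C := fun m => p (m * n)) hm ?_ ?_
  · intro a ha c hc
    obtain ⟨s, rfl⟩ := Submodule.mem_span_singleton.mp hc
    have : a * s • T k * n = (s • a) * T k * n := by simp
    rw [this]
    exact h1 _ (Submodule.smul_mem _ _ ha) _ hn
  · intro a c ha hc
    rw [add_mul]; exact hadd _ _ ha hc

theorem heckeSpan_comm (T : ℕ → E) (m : ℕ)
    (hc : ∀ i j, i + 1 < j → j < m → T i * T j = T j * T i) (k j : ℕ) (hk : k < j) (hj : j < m)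
    (u : E) (hu : u ∈ heckeSpan O T k) : u * T j = T j * u := by
  induction k generalizing u with
  | zero =>
    obtain ⟨s, rfl⟩ := Submodule.mem_one.mp hu
    exact Algebra.commutes s (T j)
  | succ k ih =>
    refine heckeSpan_succ_induction T k (p := fun u => u * T j = T j * u) ?_ ?_ ?_ u hu
    · intro u hu; exact ih (by omega) u hu
    · intro u hu v hv
      have e1 := ih (by omega) u hu
      have e2 := ih (by omega) v hv
      have e3 := hc k j (by omega) hj
      calc u * T k * v * T j = u * T k * (v * T j) := by noncomm_ring
        _ = u * (T k * T j) * v := by rw [e2]; noncomm_ring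
        _ = (u * T j) * T k * v := by rw [e3]; noncomm_ring
        _ = T j * (u * T k * v) := by rw [e1]; noncomm_ring
    · intro u v h1 h2; rw [add_mul, mul_add, h1, h2]

theorem heckeSpan_mul (T : ℕ → E) (m : ℕ) (s w : O)
    (hq : ∀ r, r < m → T r * T r = s • T r + w • 1)
    (hb : ∀ r, r + 1 < m → T r * T (r+1) * T r = T (r+1) * T r * T (r+1))
    (hc : ∀ i j, i + 1 < j → j < m → T i * T j = T j * T i) (k : ℕ) (hk : k ≤ m)
    (u v : E) (hu : u ∈ heckeSpan O T k) (hv : v ∈ heckeSpan O T k) :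
    u * v ∈ heckeSpan O T k := by
  induction k generalizing u v with
  | zero =>
    have := Submodule.mul_mem_mul hu hv
    simpa [heckeSpan] using this
  | succ k ih =>
    have ih := ih (by omega)
    -- key
    have key : ∀ y ∈ heckeSpan O T k, T k * y * T k ∈ heckeSpan O T (k + 1) := by
      intro y hy
      have sq : T k * T k ∈ heckeSpan O T (k+1) := by
        rw [hq k (by omega)]
        exact Submodule.add_mem _ (Submodule.smul_mem _ _ (gen_mem_heckeSpan T k))
          (Submodule.smul_mem _ _ (one_mem_heckeSpan T _))
      have sq2 : ∀ y ∈ heckeSpan O T k, y * (T k * T k) ∈ heckeSpan O T (k+1) := by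
        intro y hy
        rw [hq k (by omega), mul_add]
        refine Submodule.add_mem _ ?_ ?_
        · rw [mul_smul_comm]
          have := mid_mem_heckeSpan T k hy (one_mem_heckeSpan T k)
          rw [mul_one] at this
          exact Submodule.smul_mem _ _ this
        · rw [mul_smul_comm, mul_one]
          exact Submodule.smul_mem _ _ (heckeSpan_le_succ T k hy)
      cases k with
      | zero =>
        obtain ⟨s, rfl⟩ := Submodule.mem_one.mp hy
        rw [← Algebra.commutes, mul_assoc]
        exact sq2 _ hy
      | succ k =>
        refine heckeSpan_succ_induction T k
          (p := fun y => T (k+1) * y * T (k+1) ∈ heckeSpan O T (k + 1 + 1)) ?_ ?_ ?_ y hy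
        · intro u hu
          rw [← heckeSpan_comm T m hc k (k+1) (by omega) (by omega) u hu, mul_assoc]
          exact sq2 _ (heckeSpan_le_succ T k hu)
        · intro u hu v hv
          have e1 := heckeSpan_comm T m hc k (k+1) (by omega) (by omega) u hu
          have e2 := heckeSpan_comm T m hc k (k+1) (by omega) (by omega) v hv
          have : T (k+1) * (u * T k * v) * T (k+1) = (u * T k) * T (k+1) * (T k * v) := by
            calc T (k+1) * (u * T k * v) * T (k+1)
                = (T (k+1) * u) * T k * (v * T (k+1)) := by noncomm_ring
              _ = u * (T (k+1) * T k * T (k+1)) * v := by rw [← e1, e2]; noncomm_ring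
              _ = _ := by rw [← hb k (by omega)]; noncomm_ring
          rw [this]
          refine mid_mem_heckeSpan T (k+1) ?_ ?_
          · have := mid_mem_heckeSpan T k hu (one_mem_heckeSpan T k)
            rwa [mul_one] at this
          · have := mid_mem_heckeSpan T k (one_mem_heckeSpan T k) hv
            rwa [one_mul] at this
        · intro u v h1 h2
          rw [mul_add, add_mul]; exact Submodule.add_mem _ h1 h2
    -- left and right multiplication by the smaller algebra
    have lft : ∀ y ∈ heckeSpan O T k, ∀ z ∈ heckeSpan O T (k+1), y * z ∈ heckeSpan O T (k+1) := by
      intro y hy z hz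
      refine heckeSpan_succ_induction T k (p := fun z => y * z ∈ heckeSpan O T (k + 1)) ?_ ?_ ?_ z hz
      · intro u hu; exact heckeSpan_le_succ T k (ih _ _ hy hu)
      · intro u hu v hv
        rw [show y * (u * T k * v) = (y * u) * T k * v by noncomm_ring]
        exact mid_mem_heckeSpan T k (ih _ _ hy hu) hv
      · intro u v h1 h2
        rw [mul_add]; exact Submodule.add_mem _ h1 h2
    have rgt : ∀ y ∈ heckeSpan O T k, ∀ z ∈ heckeSpan O T (k+1), z * y ∈ heckeSpan O T (k+1) := by
      intro y hy z hz
      refine heckeSpan_succ_induction T k (p := fun z => z * y ∈ heckeSpan O T (k + 1)) ?_ ?_ ?_ z hz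
      · intro u hu; exact heckeSpan_le_succ T k (ih _ _ hu hy)
      · intro u hu v hv
        rw [show (u * T k * v) * y = u * T k * (v * y) by noncomm_ring]
        exact mid_mem_heckeSpan T k hu (ih _ _ hv hy)
      · intro u v h1 h2
        rw [add_mul]; exact Submodule.add_mem _ h1 h2
    refine heckeSpan_succ_induction T k (p := fun u => u * v ∈ heckeSpan O T (k + 1)) ?_ ?_ ?_ u hu
    · intro u hu; exact lft u hu v hv
    · intro u hu u' hu'
      refine heckeSpan_succ_induction T k
        (p := fun v => u * T k * u' * v ∈ heckeSpan O T (k + 1)) ?_ ?_ ?_ v hv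
      · intro v hv
        rw [mul_assoc]; exact mid_mem_heckeSpan T k hu (ih _ _ hu' hv)
      · intro v hv v' hv'
        rw [show u * T k * u' * (v * T k * v') = u * (T k * (u' * v) * T k) * v' by noncomm_ring]
        exact rgt _ hv' _ (lft _ hu _ (key _ (ih _ _ hu' hv)))
      · intro u v h1 h2
        rw [mul_add]; exact Submodule.add_mem _ h1 h2
    · intro u v h1 h2
      rw [add_mul]; exact Submodule.add_mem _ h1 h2

end FG
end Paper

namespace Paper

/-! ### The seminormal representation -/

section Semi

/-- Interchange the places `r` and `r + 1` of a sequence. -/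
def sw {N : Type*} (r : ℕ) (a : ℕ → N) : ℕ → N := fun i => a (Equiv.swap r (r + 1) i)

variable {N : Type*}

theorem sw_left (r : ℕ) (a : ℕ → N) : sw r a r = a (r + 1) := by simp [sw]
theorem sw_right (r : ℕ) (a : ℕ → N) : sw r a (r + 1) = a r := by simp [sw]
theorem sw_ne (r : ℕ) (a : ℕ → N) (i : ℕ) (h1 : i ≠ r) (h2 : i ≠ r + 1) : sw r a i = a i := by
  simp [sw, Equiv.swap_apply_of_ne_of_ne h1 h2]

theorem sw_sw (r : ℕ) (a : ℕ → N) : sw r (sw r a) = a := by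
  funext i; simp [sw]

theorem sw_far (r s : ℕ) (a : ℕ → N) (h : r + 1 < s) : sw r (sw s a) = sw s (sw r a) := by
  funext i
  unfold sw
  congr 1
  simp only [Equiv.swap_apply_def]
  split_ifs <;> omega

theorem sw_braid (r : ℕ) (a : ℕ → N) :
    sw r (sw (r + 1) (sw r a)) = sw (r + 1) (sw r (sw (r + 1) a)) := by
  funext i
  unfold sw
  congr 1
  simp only [Equiv.swap_apply_def]
  split_ifs <;> omega

/-- Data for a seminormal representation. -/
structure SD (N O K : Type*) [CommRing O] [Field K] [Algebra O K] where
  n : ℕ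
  St : Set (ℕ → N)
  fin : Finite St
  q : K
  x : N → K
  b : N → N → K
  hq : q ∈ (algebraMap O K).range
  hx : ∀ A, x A ∈ (algebraMap O K).range
  hb : ∀ A B, x A ≠ x B →
    b A B * b B A * (x A - x B) ^ 2 = (q * x A - x B) * (x A - q * x B)
  h1 : ∀ a ∈ St, ∀ r, r + 1 < n → sw r a ∉ St → b (a r) (a (r + 1)) = 0
  h2 : ∀ a ∈ St, ∀ r, r + 1 < n → x (a r) ≠ x (a (r + 1))
  h3 : ∀ a ∈ St, ∀ r, r + 2 < n → x (a r) ≠ x (a (r + 2))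

namespace SD

variable {O K : Type*} [CommRing O] [Field K] [Algebra O K] (D : SD N O K)

/-- The underlying space. -/
abbrev V : Type _ := D.St → K

/-- Extension by zero. -/
noncomputable def ex (v : D.V) (a : ℕ → N) : K := if h : a ∈ D.St then v ⟨a, h⟩ else 0

theorem ex_mem (v : D.V) (a : ℕ → N) (h : a ∈ D.St) : D.ex v a = v ⟨a, h⟩ := by simp [ex, h]
theorem ex_coe (v : D.V) (a : D.St) : D.ex v a.1 = v a := by simp [ex]

/-- The diagonal coefficient. -/
noncomputable def al (A B : N) : K := (D.q - 1) * D.x B / (D.x B - D.x A)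

/-- The operators `T_r`. -/
noncomputable def T (r : ℕ) : Module.End K D.V where
  toFun v := fun a => D.al (a.1 r) (a.1 (r + 1)) * v a +
    D.b (a.1 r) (a.1 (r + 1)) * D.ex v (sw r a.1)
  map_add' u v := by
    funext a
    have : D.ex (u + v) (sw r a.1) = D.ex u (sw r a.1) + D.ex v (sw r a.1) := by
      unfold ex; split_ifs <;> simp
    simp only [this, Pi.add_apply]; ring
  map_smul' c v := by
    funext a
    have : D.ex (c • v) (sw r a.1) = c * D.ex v (sw r a.1) := by
      unfold ex; split_ifs <;> simp
    simp only [this, Pi.smul_apply, smul_eq_mul, RingHom.id_apply]; ring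

theorem T_apply (r : ℕ) (v : D.V) (a : D.St) : D.T r v a = D.al (a.1 r) (a.1 (r + 1)) * v a +
    D.b (a.1 r) (a.1 (r + 1)) * D.ex v (sw r a.1) := rfl

theorem ex_T (r : ℕ) (v : D.V) (a : ℕ → N) (h : a ∈ D.St) :
    D.ex (D.T r v) a = D.al (a r) (a (r + 1)) * D.ex v a +
      D.b (a r) (a (r + 1)) * D.ex v (sw r a) := by
  rw [ex_mem _ _ _ h, T_apply, ex_mem _ _ _ h]

/-- One step expansion behind a coefficient. -/
theorem step (r s : ℕ) (v : D.V) (a : ℕ → N) (h : a ∈ D.St) (hr : r + 1 < D.n) :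
    D.b (a r) (a (r + 1)) * D.ex (D.T s v) (sw r a) = D.b (a r) (a (r + 1)) *
      (D.al (sw r a s) (sw r a (s + 1)) * D.ex v (sw r a) +
      D.b (sw r a s) (sw r a (s + 1)) * D.ex v (sw s (sw r a))) := by
  by_cases h' : sw r a ∈ D.St
  · rw [ex_T _ _ _ _ h']
  · rw [D.h1 a h r hr h']; ring

theorem step2 (r s t : ℕ) (v : D.V) (a : ℕ → N) (h : a ∈ D.St) (hr : r + 1 < D.n)
    (hs : s + 1 < D.n) :
    D.b (a r) (a (r + 1)) * (D.b (sw r a s) (sw r a (s + 1)) * D.ex (D.T t v) (sw s (sw r a))) =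
    D.b (a r) (a (r + 1)) * (D.b (sw r a s) (sw r a (s + 1)) *
      (D.al (sw s (sw r a) t) (sw s (sw r a) (t + 1)) * D.ex v (sw s (sw r a)) +
      D.b (sw s (sw r a) t) (sw s (sw r a) (t + 1)) * D.ex v (sw t (sw s (sw r a))))) := by
  by_cases h' : sw r a ∈ D.St
  · rw [step _ _ _ _ _ h' hs]
  · rw [D.h1 a h r hr h']; ring

theorem al_sum (A B : N) (h : D.x A ≠ D.x B) : D.al B A = D.q - 1 - D.al A B := by
  have h1 : D.x A - D.x B ≠ 0 := sub_ne_zero.mpr h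
  have h2 : D.x B - D.x A ≠ 0 := sub_ne_zero.mpr h.symm
  unfold al
  field_simp
  ring

theorem bb (A B : N) (h : D.x A ≠ D.x B) :
    D.b A B * D.b B A = D.q + D.al A B * D.al B A := by
  have h1 : D.x A - D.x B ≠ 0 := sub_ne_zero.mpr h
  have h2 : D.x B - D.x A ≠ 0 := sub_ne_zero.mpr h.symm
  have := D.hb A B h
  have e : D.b A B * D.b B A = (D.q * D.x A - D.x B) * (D.x A - D.q * D.x B) /
      (D.x A - D.x B) ^ 2 := by
    rw [← this]; field_simp
  rw [e]
  unfold al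
  field_simp
  ring

theorem al_one (A B C : N) (h1 : D.x A ≠ D.x B) (h2 : D.x B ≠ D.x C) (h3 : D.x A ≠ D.x C) :
    D.al A B * D.al B C + D.al A C * D.al B A = D.al B C * D.al A C := by
  have h1' : D.x A - D.x B ≠ 0 := sub_ne_zero.mpr h1
  have h2' : D.x B - D.x A ≠ 0 := sub_ne_zero.mpr h1.symm
  have h3' : D.x C - D.x A ≠ 0 := sub_ne_zero.mpr h3.symm
  have h4' : D.x C - D.x B ≠ 0 := sub_ne_zero.mpr h2.symm
  unfold al
  field_simp
  ring

theorem quad (r : ℕ) (hr : r + 1 < D.n) :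
    D.T r * D.T r = (D.q - 1) • D.T r + D.q • 1 := by
  apply LinearMap.ext; intro v; funext a
  have hx := D.h2 a.1 a.2 r hr
  have e1 := D.step r r v a.1 a.2 hr
  rw [sw_left, sw_right, sw_sw] at e1
  have e2 := D.bb _ _ hx
  have e3 := D.al_sum _ _ hx
  simp only [Module.End.mul_apply, LinearMap.add_apply, LinearMap.smul_apply, Pi.add_apply,
    Pi.smul_apply, smul_eq_mul, Module.End.one_apply]
  rw [T_apply, e1, T_apply, ex_coe]
  rw [e3] at e2 ⊢
  linear_combination (v a) * e2

theorem far (r s : ℕ) (hs : s + 1 < D.n) (h : r + 1 < s) :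
    D.T r * D.T s = D.T s * D.T r := by
  apply LinearMap.ext; intro v; funext a
  have e1 := D.step r s v a.1 a.2 (by omega)
  have e2 := D.step s r v a.1 a.2 (by omega)
  rw [sw_ne r a.1 s (by omega) (by omega), sw_ne r a.1 (s+1) (by omega) (by omega)] at e1
  rw [sw_ne s a.1 r (by omega) (by omega), sw_ne s a.1 (r+1) (by omega) (by omega),
    sw_far _ _ _ h] at e2
  simp only [Module.End.mul_apply]
  rw [D.T_apply r (D.T s v) a, D.T_apply s (D.T r v) a, e1, e2, T_apply, T_apply]
  ring

theorem braid (r : ℕ) (hr : r + 2 < D.n) :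
    D.T r * D.T (r + 1) * D.T r = D.T (r + 1) * D.T r * D.T (r + 1) := by
  apply LinearMap.ext; intro v; funext a
  have hA := D.h2 a.1 a.2 r (by omega)
  have hB := D.h2 a.1 a.2 (r+1) (by omega)
  have hC := D.h3 a.1 a.2 r (by omega)
  have e1 := D.step r (r+1) (D.T r v) a.1 a.2 (by omega)
  have e2 := D.step r r v a.1 a.2 (by omega)
  have e3 := D.step2 r (r+1) r v a.1 a.2 (by omega) (by omega)
  have e4 := D.step (r+1) r v a.1 a.2 (by omega)
  have f1 := D.step (r+1) r (D.T (r+1) v) a.1 a.2 (by omega)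
  have f2 := D.step (r+1) (r+1) v a.1 a.2 (by omega)
  have f3 := D.step2 (r+1) r (r+1) v a.1 a.2 (by omega) (by omega)
  have f4 := D.step r (r+1) v a.1 a.2 (by omega)
  rw [← sw_braid] at f3
  have w1 : sw r a.1 r = a.1 (r+1) := sw_left _ _
  have w2 : sw r a.1 (r+1) = a.1 r := sw_right _ _
  have w3 : sw r a.1 (r+1+1) = a.1 (r+2) := sw_ne _ _ _ (by omega) (by omega)
  have w4 : sw (r+1) a.1 r = a.1 r := sw_ne _ _ _ (by omega) (by omega)
  have w5 : sw (r+1) a.1 (r+1) = a.1 (r+2) := sw_left _ _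
  have w6 : sw (r+1) a.1 (r+1+1) = a.1 (r+1) := sw_right _ _
  have u1 : sw (r+1) (sw r a.1) r = a.1 (r+1) := by
    rw [sw_ne _ _ _ (by omega) (by omega), w1]
  have u2 : sw (r+1) (sw r a.1) (r+1) = a.1 (r+2) := by rw [sw_left, w3]
  have u3 : sw r (sw (r+1) a.1) (r+1) = a.1 r := by rw [sw_right, w4]
  have u4 : sw r (sw (r+1) a.1) (r+1+1) = a.1 (r+1) := by
    rw [sw_ne _ _ _ (by omega) (by omega), w6]
  rw [sw_sw] at e2 f2
  simp only [w1, w2, w3, w4, w5, w6, u1, u2, u3, u4, ex_coe] at e1 e2 e3 e4 f1 f2 f3 f4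
  simp only [Module.End.mul_apply]
  rw [D.T_apply r (D.T (r+1) (D.T r v)) a, D.T_apply (r+1) (D.T r (D.T (r+1) v)) a]
  simp only [show r + 1 + 1 = r + 2 from rfl] at *
  rw [e1, f1]
  simp only [T_apply, show r + 1 + 1 = r + 2 from rfl]
  generalize a.1 r = A at *
  generalize a.1 (r+1) = B at *
  generalize a.1 (r+2) = C at *
  have i1 := D.al_one A B C hA hB hC
  have s1 := D.al_sum A B hA
  have s2 := D.al_sum B C hB
  have s3 := D.al_sum A C hC
  have b1 := D.bb A B hA
  have b2 := D.bb B C hB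
  generalize D.ex (D.T r v) (sw r a.1) = y1 at *
  generalize D.ex (D.T (r+1) v) (sw (r+1) a.1) = y2 at *
  generalize D.ex (D.T r v) (sw (r+1) a.1) = y3 at *
  generalize D.ex (D.T (r+1) v) (sw r a.1) = y4 at *
  generalize D.ex (D.T r v) (sw (r+1) (sw r a.1)) = z1 at *
  generalize D.ex (D.T (r+1) v) (sw r (sw (r+1) a.1)) = z2 at *
  rw [s1] at i1 b1 e2
  rw [s2] at b2 f2
  linear_combination D.al A B * e4 + D.al A C * e2 + e3 - D.al B C * f4 - D.al A C * f2 - f3 +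
    D.b A B * D.ex v (sw r a.1) * i1 - D.b B C * D.ex v (sw (r+1) a.1) * i1 +
    D.al A C * v a * (b1 - b2) + (D.al A B - D.al B C) * v a * i1

end SD
end Semi
end Paper

namespace Paper
section Semi2
namespace SD

variable {N : Type*}
variable {O K : Type*} [CommRing O] [Field K] [Algebra O K] (D : SD N O K)

theorem ex_ne (v : D.V) (a : ℕ → N) (h : a ∉ D.St) : D.ex v a = 0 := by simp [ex, h]

/-- The Jucys–Murphy operators. -/
noncomputable def X (j : ℕ) : Module.End K D.V where
  toFun v := fun a => D.x (a.1 j) * v a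
  map_add' u v := by funext a; simp only [Pi.add_apply]; ring
  map_smul' c v := by
    funext a; simp only [Pi.smul_apply, smul_eq_mul, RingHom.id_apply]; ring

theorem X_apply (j : ℕ) (v : D.V) (a : D.St) : D.X j v a = D.x (a.1 j) * v a := rfl

theorem ex_X (j : ℕ) (v : D.V) (a : ℕ → N) : D.ex (D.X j v) a = D.x (a j) * D.ex v a := by
  unfold ex; split_ifs
  · rw [X_apply]
  · ring

theorem X_T_other (j r : ℕ) (h1 : j ≠ r) (h2 : j ≠ r + 1) (v : D.V) :
    D.X j (D.T r v) = D.T r (D.X j v) := by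
  funext a
  rw [X_apply, T_apply, T_apply, X_apply, ex_X, sw_ne _ _ _ h1 h2]; ring

theorem X_T_right (r : ℕ) (hr : r + 1 < D.n) (v : D.V) :
    D.X (r + 1) (D.T r v) = D.T r (D.X r v) + (D.q - 1) • D.X (r + 1) v := by
  funext a
  have hx := D.h2 a.1 a.2 r hr
  rw [Pi.add_apply, Pi.smul_apply, smul_eq_mul, X_apply, T_apply, T_apply, X_apply, ex_X, sw_left,
    X_apply]
  have : D.al (a.1 r) (a.1 (r+1)) * (D.x (a.1 (r+1)) - D.x (a.1 r)) =
      (D.q - 1) * D.x (a.1 (r+1)) := by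
    unfold al
    rw [div_mul_cancel₀]
    exact sub_ne_zero.mpr hx.symm
  linear_combination v a * this

theorem X_T_left (r : ℕ) (hr : r + 1 < D.n) (v : D.V) :
    D.X r (D.T r v) = D.T r (D.X (r + 1) v) - (D.q - 1) • D.X (r + 1) v := by
  funext a
  have hx := D.h2 a.1 a.2 r hr
  rw [Pi.sub_apply, Pi.smul_apply, smul_eq_mul, X_apply, T_apply, T_apply, X_apply, ex_X, sw_right]
  have : D.al (a.1 r) (a.1 (r+1)) * (D.x (a.1 (r+1)) - D.x (a.1 r)) =
      (D.q - 1) * D.x (a.1 (r+1)) := by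
    unfold al
    rw [div_mul_cancel₀]
    exact sub_ne_zero.mpr hx.symm
  linear_combination - v a * this

/-- The basis vector of `t`. -/
noncomputable def f (t : D.St) : D.V := Pi.single t 1

/-- Evaluation at a vector. -/
def evl (v : D.V) : Module.End K D.V →ₗ[O] D.V where
  toFun h := h v
  map_add' _ _ := rfl
  map_smul' _ _ := rfl

/-- The integral lattice generated by a vector. -/
noncomputable def L (t : D.St) : Submodule O D.V :=
  (heckeSpan O D.T (D.n - 1)).map (D.evl (D.f t))

theorem L_fg (t : D.St) : (D.L t).FG := (heckeSpan_fg D.T _).map _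

theorem f_mem_L (t : D.St) : D.f t ∈ D.L t :=
  ⟨1, one_mem_heckeSpan _ _, rfl⟩

theorem heckeSpan_stable (M : Submodule O D.V)
    (hM : ∀ r, r + 1 < D.n → ∀ v ∈ M, D.T r v ∈ M) (k : ℕ) (hk : k ≤ D.n - 1) (u : Module.End K D.V)
    (hu : u ∈ heckeSpan O D.T k) : ∀ v ∈ M, u v ∈ M := by
  induction k generalizing u with
  | zero =>
    obtain ⟨s, rfl⟩ := Submodule.mem_one.mp hu
    intro v hv
    exact M.smul_mem s hv
  | succ k ih =>
    refine heckeSpan_succ_induction D.T k (p := fun u => ∀ v ∈ M, u v ∈ M) ?_ ?_ ?_ u hu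
    · intro u hu; exact ih (by omega) u hu
    · intro u hu v hv w hw
      exact ih (by omega) u hu _ (hM k (by omega) _ (ih (by omega) v hv _ hw))
    · intro u v h1 h2 w hw
      exact M.add_mem (h1 w hw) (h2 w hw)

theorem L_le (t : D.St) (M : Submodule O D.V)
    (hM : ∀ r, r + 1 < D.n → ∀ v ∈ M, D.T r v ∈ M) (ht : D.f t ∈ M) : D.L t ≤ M := by
  rintro _ ⟨u, hu, rfl⟩
  exact D.heckeSpan_stable M hM _ le_rfl u hu _ ht

theorem L_T (t : D.St) (r : ℕ) (hr : r + 1 < D.n) (v : D.V) (hv : v ∈ D.L t) :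
    D.T r v ∈ D.L t := by
  obtain ⟨u, hu, rfl⟩ := hv
  obtain ⟨q', hq'⟩ := D.hq
  refine ⟨D.T r * u, ?_, rfl⟩
  refine heckeSpan_mul D.T (D.n - 1) (q' - 1) q' ?_ ?_ ?_ _ le_rfl _ _ ?_ hu
  · intro r hr
    rw [D.quad r (by omega), ← hq']
    congr 1
    · apply LinearMap.ext; intro v
      simp only [LinearMap.smul_apply]
      rw [← algebraMap_smul K (q' - 1) (D.T r v), map_sub, map_one]
    · apply LinearMap.ext; intro v
      simp only [LinearMap.smul_apply]
      rw [← algebraMap_smul K q']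
  · intro r hr; exact D.braid r (by omega)
  · intro i j hij hj; exact D.far i j (by omega) hij
  · exact gen_mem_heckeSpan' _ _ _ (by omega)

theorem smul_range_mem {c : K} (hc : c ∈ (algebraMap O K).range) (M : Submodule O D.V) {v : D.V}
    (hv : v ∈ M) : c • v ∈ M := by
  obtain ⟨c', rfl⟩ := hc
  rw [algebraMap_smul]; exact M.smul_mem _ hv

theorem qm_mem : D.q - 1 ∈ (algebraMap O K).range := Subring.sub_mem _ D.hq (Subring.one_mem _)

theorem L_X (t : D.St) (j : ℕ) (v : D.V) (hv : v ∈ D.L t) : D.X j v ∈ D.L t := by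
  let M : Submodule O D.V :=
    { carrier := {v | v ∈ D.L t ∧ ∀ j, D.X j v ∈ D.L t}
      add_mem' := by
        rintro u v ⟨h1, h2⟩ ⟨h3, h4⟩
        exact ⟨Submodule.add_mem _ h1 h3, fun j => by
          rw [map_add]; exact Submodule.add_mem _ (h2 j) (h4 j)⟩
      zero_mem' := ⟨Submodule.zero_mem _, fun j => by rw [map_zero]; exact Submodule.zero_mem _⟩
      smul_mem' := by
        rintro c v ⟨h1, h2⟩
        refine ⟨Submodule.smul_mem _ _ h1, fun j => ?_⟩
        rw [← algebraMap_smul K c v, map_smul, algebraMap_smul]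
        exact Submodule.smul_mem _ _ (h2 j) }
  have : D.L t ≤ M := by
    apply D.L_le
    · rintro r hr v ⟨h1, h2⟩
      refine ⟨D.L_T t r hr v h1, fun j => ?_⟩
      by_cases hj : j = r
      · subst hj
        rw [D.X_T_left _ hr]
        exact Submodule.sub_mem _ (D.L_T t _ hr _ (h2 _)) (D.smul_range_mem D.qm_mem _ (h2 _))
      · by_cases hj' : j = r + 1
        · subst hj'
          rw [D.X_T_right _ hr]
          exact Submodule.add_mem _ (D.L_T t _ hr _ (h2 _)) (D.smul_range_mem D.qm_mem _ (h2 _))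
        · rw [D.X_T_other _ _ hj hj']
          exact D.L_T t _ hr _ (h2 _)
    · refine ⟨D.f_mem_L t, fun j => ?_⟩
      have : D.X j (D.f t) = D.x (t.1 j) • D.f t := by
        funext a
        rw [X_apply, Pi.smul_apply, smul_eq_mul]
        by_cases h : a = t
        · rw [h]
        · simp [f, h]
      rw [this]
      exact D.smul_range_mem (D.hx _) _ (D.f_mem_L t)
  exact (this hv).2 j

/-- The scalar by which the product of `X_k - x_B` acts. -/
noncomputable def sc (P : Finset (ℕ × N)) (t : ℕ → N) : K := ∏ p ∈ P, (D.x (t p.1) - D.x p.2)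

theorem L_sc (t : D.St) (P : Finset (ℕ × N)) (v : D.V) (hv : v ∈ D.L t) :
    (fun a => D.sc P a.1 * v a : D.V) ∈ D.L t := by
  induction P using Finset.induction_on with
  | empty => simpa [sc] using hv
  | insert p P hp ih =>
    have : (fun a => D.sc (insert p P) a.1 * v a : D.V) =
        D.X p.1 (fun a => D.sc P a.1 * v a : D.V) - D.x p.2 • (fun a => D.sc P a.1 * v a : D.V) := by
      funext a
      rw [Pi.sub_apply, Pi.smul_apply, X_apply, smul_eq_mul]
      simp only [sc, Finset.prod_insert hp]
      ring
    rw [this]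
    exact Submodule.sub_mem _ (D.L_X t _ _ ih) (D.smul_range_mem (D.hx _) _ ih)

theorem integral_coeff [IsDomain O] [IsNoetherianRing O] [IsIntegrallyClosed O]
    [IsFractionRing O K] (t : D.St) (P : Finset (ℕ × N)) (hP : ∀ s : D.St, s ≠ t → D.sc P s.1 = 0)
    (v : D.V) (hv : v ∈ D.L t) : D.sc P t.1 * v t ∈ (algebraMap O K).range := by
  have hm : ∀ w : D.V, (fun a => D.sc P a.1 * w a : D.V) = (D.sc P t.1 * w t) • D.f t := by
    intro w
    funext a
    rw [Pi.smul_apply, smul_eq_mul]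
    by_cases h : a = t
    · subst h; simp [f]
    · rw [hP a h]; simp [f, h]
  let ι : K →ₗ[O] D.V :=
    { toFun := fun c => c • D.f t
      map_add' := fun a b => add_smul _ _ _
      map_smul' := fun a b => by simp [smul_assoc] }
  have hι : Function.Injective ι := by
    intro a b hab
    have := congrFun hab t
    simpa [ι, f] using this
  let M : Submodule O K := (D.L t).comap ι
  have hM1 : (1 : K) ∈ M := by
    change (1 : K) • D.f t ∈ D.L t
    rw [one_smul]; exact D.f_mem_L t
  have hbot : M ≠ ⊥ := by
    intro h
    rw [h] at hM1
    exact one_ne_zero ((Submodule.mem_bot O).mp hM1)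
  have hfg : M.FG := by
    apply Submodule.fg_of_fg_map_injective ι hι
    have : IsNoetherian O (D.L t) := isNoetherian_of_fg_of_noetherian _ (D.L_fg t)
    exact Submodule.FG.of_le (D.L_fg t) (Submodule.map_comap_le _ _)
  have hIntegral : IsIntegral O (D.sc P t.1 * v t) := by
    apply isIntegral_of_smul_mem_submodule M hbot hfg
    intro c hc
    change (D.sc P t.1 * v t * c) • D.f t ∈ D.L t
    obtain ⟨u, hu, rfl⟩ := hv
    have h1 : u (c • D.f t) ∈ D.L t :=
      D.heckeSpan_stable (D.L t) (fun r hr v hv => D.L_T t r hr v hv) _ le_rfl u hu _ hc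
    rw [map_smul] at h1
    have h2 := D.L_sc t P _ h1
    rw [hm] at h2
    convert h2 using 2
    rw [Pi.smul_apply, smul_eq_mul]
    change D.sc P t.1 * (u (D.f t)) t * c = _
    ring
  exact IsIntegrallyClosed.isIntegral_iff.mp hIntegral

/-- The bilinear form. -/
noncomputable def B (γ : D.St → K) (u v : D.V) : K :=
  haveI := D.fin; haveI := Fintype.ofFinite D.St
  ∑ a, γ a * u a * v a

theorem B_T (γ : D.St → K) (r : ℕ) (hr : r + 1 < D.n)
    (hγ : ∀ (a : D.St) (h : sw r a.1 ∈ D.St), γ a * D.b (a.1 r) (a.1 (r+1)) =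
      γ ⟨sw r a.1, h⟩ * D.b (a.1 (r+1)) (a.1 r)) (u v : D.V) :
    D.B γ (D.T r u) v = D.B γ u (D.T r v) := by
  have := D.fin
  unfold B
  letI : Fintype D.St := Fintype.ofFinite D.St
  let g : D.St → D.St := fun a => if h : sw r a.1 ∈ D.St then ⟨sw r a.1, h⟩ else a
  have hg : Function.Involutive g := by
    intro a
    by_cases h : sw r a.1 ∈ D.St
    · have e : g a = ⟨sw r a.1, h⟩ := by simp [g, h]
      have h2 : sw r (sw r a.1) ∈ D.St := by rw [sw_sw]; exact a.2
      rw [e]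
      simp only [g, h2, dif_pos]
      exact Subtype.ext (sw_sw _ _)
    · have e : g a = a := by simp [g, h]
      rw [e, e]
  have key : ∑ a : D.St, γ a * (D.b (a.1 r) (a.1 (r+1)) * D.ex u (sw r a.1)) * v a =
      ∑ a : D.St, γ a * u a * (D.b (a.1 r) (a.1 (r+1)) * D.ex v (sw r a.1)) := by
    rw [← Equiv.sum_comp hg.toPerm (fun a : D.St =>
      γ a * u a * (D.b (a.1 r) (a.1 (r+1)) * D.ex v (sw r a.1)))]
    apply Finset.sum_congr rfl
    intro a _
    change _ = γ (g a) * u (g a) * (D.b ((g a).1 r) ((g a).1 (r+1)) * D.ex v (sw r (g a).1))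
    by_cases h : sw r a.1 ∈ D.St
    · have e : g a = ⟨sw r a.1, h⟩ := by simp [g, h]
      rw [e]
      simp only [sw_left, sw_right, sw_sw, ex_coe]
      rw [ex_mem _ _ _ h]
      linear_combination u ⟨sw r a.1, h⟩ * v a * hγ a h
    · have e : g a = a := by simp [g, h]
      rw [e, D.h1 a.1 a.2 r hr h]; ring
  have e1 : ∀ a : D.St, γ a * (D.T r u) a * v a = γ a * u a * (D.al (a.1 r) (a.1 (r+1)) * v a) +
      γ a * (D.b (a.1 r) (a.1 (r+1)) * D.ex u (sw r a.1)) * v a := by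
    intro a; rw [T_apply]; ring
  have e2 : ∀ a : D.St, γ a * u a * (D.T r v) a = γ a * u a * (D.al (a.1 r) (a.1 (r+1)) * v a) +
      γ a * u a * (D.b (a.1 r) (a.1 (r+1)) * D.ex v (sw r a.1)) := by
    intro a; rw [T_apply]; ring
  simp only [e1, e2, Finset.sum_add_distrib]
  congr 1

theorem B_integral [IsDomain O] [IsNoetherianRing O] [IsIntegrallyClosed O]
    [IsFractionRing O K] (t : D.St) (P : Finset (ℕ × N)) (hP : ∀ s : D.St, s ≠ t → D.sc P s.1 = 0)
    (γ : D.St → K) (h0 : γ t = D.sc P t.1)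
    (hγ : ∀ r, r + 1 < D.n → ∀ (a : D.St) (h : sw r a.1 ∈ D.St),
      γ a * D.b (a.1 r) (a.1 (r+1)) = γ ⟨sw r a.1, h⟩ * D.b (a.1 (r+1)) (a.1 r))
    (u v : D.V) (hu : u ∈ D.L t) (hv : v ∈ D.L t) : D.B γ u v ∈ (algebraMap O K).range := by
  have := D.fin
  let M : Submodule O D.V :=
    { carrier := {u | ∀ v ∈ D.L t, D.B γ u v ∈ (algebraMap O K).range}
      add_mem' := by
        intro u w h1 h2 v hv
        have : D.B γ (u + w) v = D.B γ u v + D.B γ w v := by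
          unfold B
          rw [← Finset.sum_add_distrib]
          apply Finset.sum_congr rfl
          intro a _; simp only [Pi.add_apply]; ring
        rw [this]; exact Subring.add_mem _ (h1 v hv) (h2 v hv)
      zero_mem' := by
        intro v hv
        have : D.B γ 0 v = 0 := by simp [B]
        rw [this]; exact Subring.zero_mem _
      smul_mem' := by
        intro c u h1 v hv
        have : D.B γ (c • u) v = algebraMap O K c * D.B γ u v := by
          unfold B
          rw [Finset.mul_sum]
          apply Finset.sum_congr rfl
          intro a _
          rw [Pi.smul_apply, Algebra.smul_def]; ring
        rw [this]; exact Subring.mul_mem _ ⟨c, rfl⟩ (h1 v hv) }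
  have : D.L t ≤ M := by
    apply D.L_le
    · intro r hr u hu v hv
      rw [D.B_T γ r hr (hγ r hr)]
      exact hu _ (D.L_T t r hr v hv)
    · intro v hv
      have : D.B γ (D.f t) v = D.sc P t.1 * v t := by
        unfold B
        rw [Finset.sum_eq_single t]
        · simp [f, h0]
        · intro b _ hb; simp [f, hb]
        · intro h; exact absurd (@Finset.mem_univ _ (Fintype.ofFinite D.St) t) h
      rw [this]
      exact D.integral_coeff t P hP v hv
  exact this hu v hv

theorem triangular (t0 : D.St) (len : D.St → ℕ)
    (hl0 : ∀ t : D.St, t ≠ t0 → ∃ r, r + 1 < D.n ∧ ∃ h : sw r t.1 ∈ D.St,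
      D.b (t.1 r) (t.1 (r+1)) = 1 ∧ len ⟨sw r t.1, h⟩ + 1 = len t)
    (hl1 : ∀ (t : D.St) (r : ℕ) (h : sw r t.1 ∈ D.St), r + 1 < D.n → len t ≤ len ⟨sw r t.1, h⟩ + 1)
    (m : ℕ) : ∀ t : D.St, len t = m → ∃ v ∈ D.L t0, v t = 1 ∧ ∀ s, v s ≠ 0 → s = t ∨ len s < len t := by
  induction m using Nat.strong_induction_on with
  | _ m ih =>
    intro t ht
    by_cases h0 : t = t0
    · subst h0
      refine ⟨D.f t, D.f_mem_L t, by simp [f], fun s hs => Or.inl ?_⟩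
      by_contra h
      exact hs (by simp [f, h])
    · obtain ⟨r, hr, h, hb, hl⟩ := hl0 t h0
      obtain ⟨w, hw, hw1, hw2⟩ := ih (len ⟨sw r t.1, h⟩) (by omega) ⟨sw r t.1, h⟩ rfl
      refine ⟨D.T r w, D.L_T _ _ hr _ hw, ?_, ?_⟩
      · rw [T_apply, hb, ex_mem _ _ _ h, hw1]
        have : w t = 0 := by
          by_contra hne
          rcases hw2 t hne with h' | h'
          · rw [← h'] at hl; omega
          · omega
        rw [this]; ring
      · intro s hs
        rw [T_apply] at hs
        by_cases h1 : w s = 0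
        · rw [h1, mul_zero, zero_add] at hs
          by_cases h2 : sw r s.1 ∈ D.St
          · rw [ex_mem _ _ _ h2] at hs
            rcases hw2 _ (right_ne_zero_of_mul hs) with h' | h'
            · left
              have := congrArg (sw r) (congrArg Subtype.val h')
              simp only [sw_sw] at this
              exact Subtype.ext this
            · right
              have := hl1 s r h2 hr
              omega
          · rw [ex_ne _ _ _ h2, mul_zero] at hs; exact absurd rfl hs
        · rcases hw2 s h1 with h' | h'
          · right; rw [h']; omega
          · right; omega

theorem main [IsDomain O] [IsNoetherianRing O] [IsIntegrallyClosed O]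
    [IsFractionRing O K] [Fintype D.St] (t0 : D.St) (P : Finset (ℕ × N))
    (hP : ∀ s : D.St, s ≠ t0 → D.sc P s.1 = 0)
    (γ : D.St → K) (h0 : γ t0 = D.sc P t0.1)
    (hγ : ∀ r, r + 1 < D.n → ∀ (a : D.St) (h : sw r a.1 ∈ D.St),
      γ a * D.b (a.1 r) (a.1 (r+1)) = γ ⟨sw r a.1, h⟩ * D.b (a.1 (r+1)) (a.1 r))
    (len : D.St → ℕ)
    (hl0 : ∀ t : D.St, t ≠ t0 → ∃ r, r + 1 < D.n ∧ ∃ h : sw r t.1 ∈ D.St,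
      D.b (t.1 r) (t.1 (r+1)) = 1 ∧ len ⟨sw r t.1, h⟩ + 1 = len t)
    (hl1 : ∀ (t : D.St) (r : ℕ) (h : sw r t.1 ∈ D.St), r + 1 < D.n →
      len t ≤ len ⟨sw r t.1, h⟩ + 1) :
    ∏ t, γ t ∈ (algebraMap O K).range := by
  choose w hw hw1 hw2 using fun t => D.triangular t0 len hl0 hl1 _ t rfl
  let M : Matrix D.St D.St K := Matrix.of fun s t => w t s
  have hM : M.det = 1 := by
    have hbt : M.BlockTriangular len := by
      intro i j hij
      by_contra h
      rcases hw2 j i h with h | h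
      · rw [h] at hij; omega
      · omega
    rw [hbt.det]
    apply Finset.prod_eq_one
    intro k _
    have : M.toSquareBlock len k = 1 := by
      ext i j
      rw [Matrix.one_apply]
      simp only [Matrix.toSquareBlock_def, Matrix.of_apply]
      split_ifs with h
      · rw [h]; exact hw1 _
      · by_contra hne
        rcases hw2 j.1 i.1 hne with h' | h'
        · exact h (Subtype.ext h')
        · have := i.2; have := j.2; omega
    rw [this, Matrix.det_one]
  have hG : (M.transpose * Matrix.diagonal γ * M).det = ∏ t, γ t := by
    rw [Matrix.det_mul, Matrix.det_mul, Matrix.det_transpose, hM, Matrix.det_diagonal]; ring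
  have hE : ∀ i j, (M.transpose * Matrix.diagonal γ * M) i j ∈ (algebraMap O K).range := by
    intro i j
    have : (M.transpose * Matrix.diagonal γ * M) i j = D.B γ (w i) (w j) := by
      rw [Matrix.mul_apply]
      unfold B
      rw [show Fintype.ofFinite D.St = ‹Fintype D.St› from Subsingleton.elim _ _]
      apply Finset.sum_congr rfl
      intro a _
      rw [Matrix.mul_diagonal]
      simp only [M, Matrix.transpose_apply, Matrix.of_apply]; ring
    rw [this]
    exact D.B_integral t0 P hP γ h0 hγ _ _ (hw i) (hw j)
  choose g hg using hE
  refine ⟨(Matrix.of g).det, ?_⟩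
  rw [← hG, RingHom.map_det]
  congr 1
  ext i j
  simp [hg]

end SD
end Semi2
end Paper

namespace Paper
section Valuation

/-- The valuation ring. -/
abbrev OO : Type := PowerSeries ℂ
/-- Its field of fractions. -/
abbrev KK : Type := FractionRing OO


/-- The uniformizer in the field of fractions. -/
noncomputable def pX : KK := algebraMap OO KK PowerSeries.X

theorem pX_ne : pX ≠ 0 := by
  unfold pX
  rw [Ne, IsFractionRing.to_map_eq_zero_iff]
  exact PowerSeries.X_ne_zero

/-- `y` has valuation `k`. -/
def Val (y : KK) (k : ℤ) : Prop := ∃ u : OOˣ, y = algebraMap OO KK u * pX ^ k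

theorem algU_ne (u : OOˣ) : algebraMap OO KK u ≠ 0 := by
  rw [Ne, IsFractionRing.to_map_eq_zero_iff]
  exact u.ne_zero

theorem Val.ne_zero {y : KK} {k : ℤ} (h : Val y k) : y ≠ 0 := by
  obtain ⟨u, rfl⟩ := h
  exact mul_ne_zero (algU_ne u) (zpow_ne_zero _ pX_ne)

theorem Val.mul {y z : KK} {k l : ℤ} (h : Val y k) (h' : Val z l) : Val (y * z) (k + l) := by
  obtain ⟨u, rfl⟩ := h
  obtain ⟨v, rfl⟩ := h'
  refine ⟨u * v, ?_⟩
  rw [zpow_add₀ pX_ne, Units.val_mul, map_mul]; ring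

theorem Val.unit (u : OOˣ) : Val (algebraMap OO KK u) 0 := ⟨u, by simp⟩

theorem Val.one : Val 1 0 := ⟨1, by simp⟩

theorem Val.inv {y : KK} {k : ℤ} (h : Val y k) : Val y⁻¹ (-k) := by
  obtain ⟨u, rfl⟩ := h
  refine ⟨u⁻¹, ?_⟩
  rw [mul_inv, zpow_neg]
  congr 1
  apply inv_eq_of_mul_eq_one_right
  rw [← map_mul]; simp

theorem Val.neg {y : KK} {k : ℤ} (h : Val y k) : Val (-y) k := by
  obtain ⟨u, rfl⟩ := h
  exact ⟨-u, by simp⟩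

theorem Val.prod {ι : Type*} (s : Finset ι) (f : ι → KK) (g : ι → ℤ)
    (h : ∀ i ∈ s, Val (f i) (g i)) : Val (∏ i ∈ s, f i) (∑ i ∈ s, g i) := by
  induction s using Finset.induction_on with
  | empty => simpa using Val.one
  | insert a s ha ih =>
    rw [Finset.prod_insert ha, Finset.sum_insert ha]
    exact (h a (by simp)).mul (ih fun i hi => h i (by simp [hi]))

theorem Val.nonneg {y : KK} {k : ℤ} (h : Val y k) (hy : y ∈ (algebraMap OO KK).range) : 0 ≤ k := by
  obtain ⟨u, rfl⟩ := h
  obtain ⟨z, hz⟩ := hy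
  by_contra hk
  obtain ⟨m, hm⟩ : ∃ m : ℕ, k = -((m : ℤ) + 1) := ⟨(-k - 1).toNat, by omega⟩
  have h1 : algebraMap OO KK (z * PowerSeries.X ^ (m + 1)) = algebraMap OO KK u := by
    rw [map_mul, hz, hm, map_pow]
    change _ * pX ^ (m+1) = _
    rw [zpow_neg, mul_assoc, show ((m:ℤ)+1) = ((m+1 : ℕ) : ℤ) by push_cast; ring, zpow_natCast,
      inv_mul_cancel₀ (pow_ne_zero _ pX_ne), mul_one]
  have h2 : z * PowerSeries.X ^ (m + 1) = (u : OO) := IsFractionRing.injective OO KK h1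
  have h3 : PowerSeries.X ∣ (u : OO) := by
    rw [← h2]; exact Dvd.dvd.mul_left (dvd_pow_self _ (by omega)) _
  rw [PowerSeries.X_dvd_iff] at h3
  have h4 : IsUnit (PowerSeries.constantCoeff (u : OO)) := PowerSeries.isUnit_constantCoeff _ u.isUnit
  rw [h3] at h4
  exact not_isUnit_zero h4

/-- A primitive root of unity. -/
noncomputable def ze (e : ℕ) : ℂ := Complex.exp (2 * Real.pi * Complex.I / e)

/-- The Hecke parameter as a power series. -/
noncomputable def qO (e : ℕ) : OO := PowerSeries.C (ze e) * (1 + PowerSeries.X)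

theorem qO_unit (e : ℕ) : IsUnit (qO e) := by
  rw [PowerSeries.isUnit_iff_constantCoeff]
  simp [qO, ze]

/-- The Hecke parameter as a unit. -/
noncomputable def qU (e : ℕ) : OOˣ := (qO_unit e).unit

/-- Powers of the Hecke parameter. -/
noncomputable def qp (e : ℕ) (z : ℤ) : KK := algebraMap OO KK ((qU e ^ z : OOˣ) : OO)

theorem qp_range (e : ℕ) (z : ℤ) : qp e z ∈ (algebraMap OO KK).range := ⟨_, rfl⟩
theorem qp_add (e : ℕ) (a b : ℤ) : qp e (a + b) = qp e a * qp e b := by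
  simp [qp, zpow_add]
theorem qp_zero (e : ℕ) : qp e 0 = 1 := by simp [qp]
theorem qp_val (e : ℕ) (z : ℤ) : Val (qp e z) 0 := Val.unit _

theorem qp_sub_one_nat (e : ℕ) (he : 2 ≤ e) (d : ℕ) (hd : 0 < d) :
    Val (qp e d - 1) (if e ∣ d then 1 else 0) := by
  have hz : IsPrimitiveRoot (ze e) e := Complex.isPrimitiveRoot_exp e (by omega)
  have h1 : qp e d - 1 = algebraMap OO KK (qO e ^ d - 1) := by
    simp [qp, qU, map_sub, map_pow]
  rw [h1]
  split_ifs with h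
  · have hz1 : ze e ^ d = 1 := (hz.pow_eq_one_iff_dvd d).mpr h
    have h2 : qO e ^ d - 1 = (∑ i ∈ Finset.range d, (1 + PowerSeries.X : OO) ^ i) * PowerSeries.X := by
      unfold qO
      rw [mul_pow, ← map_pow, hz1, map_one, one_mul]
      have := geom_sum_mul (1 + PowerSeries.X : OO) d
      rw [← this]; ring
    have h3 : IsUnit (∑ i ∈ Finset.range d, (1 + PowerSeries.X : OO) ^ i) := by
      rw [PowerSeries.isUnit_iff_constantCoeff]
      simp [map_sum]; omega
    refine ⟨h3.unit, ?_⟩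
    rw [h2, map_mul, zpow_one]; rfl
  · have h3 : IsUnit (qO e ^ d - 1) := by
      rw [PowerSeries.isUnit_iff_constantCoeff]
      have : ze e ^ d ≠ 1 := fun h' => h ((hz.pow_eq_one_iff_dvd d).mp h')
      simp [qO, sub_ne_zero, this]
    exact Val.unit h3.unit

theorem qp_sub (e : ℕ) (he : 2 ≤ e) (a b : ℤ) (hab : a ≠ b) :
    Val (qp e a - qp e b) (if (a : ZMod e) = (b : ZMod e) then 1 else 0) := by
  have main : ∀ a b : ℤ, b < a → Val (qp e a - qp e b) (if (a : ZMod e) = (b : ZMod e) then 1 else 0) := by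
    intro a b hab
    obtain ⟨d, hd⟩ : ∃ d : ℕ, a = b + d := ⟨(a - b).toNat, by omega⟩
    have h := qp_sub_one_nat e he d (by omega)
    have h2 := (qp_val e b).mul h
    have h3 : qp e b * (qp e d - 1) = qp e a - qp e b := by
      rw [hd, qp_add]; ring
    rw [h3, zero_add] at h2
    convert h2 using 2
    rw [hd]
    push_cast
    rw [add_eq_left, ZMod.natCast_eq_zero_iff]
  rcases lt_or_gt_of_ne hab with h | h
  · have := (main b a h).neg
    rw [neg_sub] at this
    simpa [eq_comm] using this
  · exact main a b h

theorem qp_inj (e : ℕ) (he : 2 ≤ e) (a b : ℤ) (h : qp e a = qp e b) : a = b := by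
  by_contra hab
  exact (qp_sub e he a b hab).ne_zero (sub_eq_zero.mpr h)

end Valuation
end Paper

namespace Paper
section Comb

variable {ℓ : ℕ} {S : Set Node}

theorem IsDiagramSet.down (hS : IsDiagramSet ℓ S) {l i j i' j' : ℕ} (h : (l, i, j) ∈ S)
    (hi : i' ≤ i) (hj : j' ≤ j) : (l, i', j') ∈ S := by
  have h1 : (l, i, j') ∈ S := by
    clear hi
    induction j, hj using Nat.le_induction with
    | base => exact h
    | succ j hj ih => exact ih (hS.2.2.1 _ _ _ h)
  clear h
  induction i, hi using Nat.le_induction with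
  | base => exact h1
  | succ i hi ih => exact ih (hS.2.2.2 _ _ _ h1)

theorem add_iff (hS : IsDiagramSet ℓ S) (l i j : ℕ) : Addable ℓ S (l, i, j) ↔
    (l, i, j) ∉ S ∧ l < ℓ ∧ (∀ i', i = i' + 1 → (l, i', j) ∈ S) ∧
      (∀ j', j = j' + 1 → (l, i, j') ∈ S) := by
  constructor
  · rintro ⟨h1, h2⟩
    refine ⟨h1, h2.2.1 (l, i, j) (by simp), ?_, ?_⟩
    · rintro i' rfl
      have := h2.2.2.2 l i' j (by simp)
      simpa using this
    · rintro j' rfl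
      have := h2.2.2.1 l i j' (by simp)
      simpa using this
  · rintro ⟨h1, h2, h3, h4⟩
    refine ⟨h1, hS.1.union (Set.finite_singleton _), ?_, ?_, ?_⟩
    · rintro A (hA | hA)
      · exact hS.2.1 A hA
      · rw [hA]; exact h2
    · rintro l' r c (hA | hA)
      · exact Or.inl (hS.2.2.1 _ _ _ hA)
      · simp only [Set.mem_singleton_iff, Prod.mk.injEq] at hA
        obtain ⟨rfl, rfl, rfl⟩ := hA
        exact Or.inl (h4 _ rfl)
    · rintro l' r c (hA | hA)
      · exact Or.inl (hS.2.2.2 _ _ _ hA)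
      · simp only [Set.mem_singleton_iff, Prod.mk.injEq] at hA
        obtain ⟨rfl, rfl, rfl⟩ := hA
        exact Or.inl (h3 _ rfl)

theorem add_iff2 (hS : IsDiagramSet ℓ S) (l i j : ℕ) : Addable ℓ S (l, i, j) ↔
    (l, i, j) ∉ S ∧ l < ℓ ∧ (i = 0 ∨ (l, i - 1, j) ∈ S) ∧ (j = 0 ∨ (l, i, j - 1) ∈ S) := by
  rw [add_iff hS]
  cases i <;> cases j <;> simp

theorem rem_iff (hS : IsDiagramSet ℓ S) (l i j : ℕ) : Removable ℓ S (l, i, j) ↔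
    (l, i, j) ∈ S ∧ (l, i + 1, j) ∉ S ∧ (l, i, j + 1) ∉ S := by
  constructor
  · rintro ⟨h1, h2⟩
    refine ⟨h1, ?_, ?_⟩
    · intro h
      have := h2.2.2.2 l i j ⟨h, by simp⟩
      exact this.2 rfl
    · intro h
      have := h2.2.2.1 l i j ⟨h, by simp⟩
      exact this.2 rfl
  · rintro ⟨h1, h2, h3⟩
    refine ⟨h1, hS.1.subset Set.sdiff_subset, ?_, ?_, ?_⟩
    · rintro A hA
      exact hS.2.1 A hA.1
    · rintro l' r c hA
      refine ⟨hS.2.2.1 _ _ _ hA.1, ?_⟩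
      intro h
      simp only [Set.mem_singleton_iff, Prod.mk.injEq] at h
      obtain ⟨rfl, rfl, rfl⟩ := h
      exact h3 hA.1
    · rintro l' r c hA
      refine ⟨hS.2.2.2 _ _ _ hA.1, ?_⟩
      intro h
      simp only [Set.mem_singleton_iff, Prod.mk.injEq] at h
      obtain ⟨rfl, rfl, rfl⟩ := h
      exact h2 hA.1

/-- A set of nodes lies in the box of size `M`. -/
def InBox (M : ℕ) (S : Set Node) : Prop := ∀ A ∈ S, A.2.1 < M ∧ A.2.2 < M

/-- The window of relevant nodes. -/
def Win (ℓ M : ℕ) : Finset Node :=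
  Finset.range ℓ ×ˢ Finset.range (M + 1) ×ˢ Finset.range (M + 1)

theorem mem_Win (ℓ M l i j : ℕ) : (l, i, j) ∈ Win ℓ M ↔ l < ℓ ∧ i < M + 1 ∧ j < M + 1 := by
  simp [Win]

theorem add_mem_Win (hS : IsDiagramSet ℓ S) {M : ℕ} (hM : InBox M S) (A : Node)
    (h : Addable ℓ S A) : A ∈ Win ℓ M := by
  obtain ⟨l, i, j⟩ := A
  rw [add_iff hS] at h
  obtain ⟨h1, h2, h3, h4⟩ := h
  rw [mem_Win]
  refine ⟨h2, ?_, ?_⟩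
  · rcases Nat.eq_zero_or_eq_sub_one_add_one (n := i) with h | h
    · omega
    · have := (hM _ (h3 _ h)).1
      simp only at this; omega
  · rcases Nat.eq_zero_or_eq_sub_one_add_one (n := j) with h | h
    · omega
    · have := (hM _ (h4 _ h)).2
      simp only at this; omega

theorem mem_Win_of_mem (hS : IsDiagramSet ℓ S) {M : ℕ} (hM : InBox M S) (A : Node)
    (h : A ∈ S) : A ∈ Win ℓ M := by
  obtain ⟨l, i, j⟩ := A
  rw [mem_Win]
  have h1 := hS.2.1 _ h
  have h2 := hM _ h
  simp only at h1 h2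
  omega

/-- Signed indicator of addable and removable nodes. -/
noncomputable def wt (ℓ : ℕ) (S : Set Node) (C : Node) : ℤ :=
  (if Addable ℓ S C then 1 else 0) - (if Removable ℓ S C then 1 else 0)

theorem dNode_eq (hS : IsDiagramSet ℓ S) {M : ℕ} (hM : InBox M S) (e : ℕ) (κ : ℕ → ℤ) (A : Node) :
    dNode ℓ e κ S A = ∑ C ∈ Win ℓ M,
      if resNode e κ C = resNode e κ A ∧ nodeBelow A C then wt ℓ S C else 0 := by
  have key : ∀ p : Node → Prop, (∀ C, p C → C ∈ Win ℓ M) → (Set.ncard {C | p C ∧ resNode e κ C =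
      resNode e κ A ∧ nodeBelow A C} : ℤ) = ∑ C ∈ Win ℓ M,
      if resNode e κ C = resNode e κ A ∧ nodeBelow A C then (if p C then 1 else 0) else 0 := by
    intro p hp
    have : {C | p C ∧ resNode e κ C = resNode e κ A ∧ nodeBelow A C} =
        ((Win ℓ M).filter (fun C => (resNode e κ C = resNode e κ A ∧ nodeBelow A C) ∧ p C) :
          Set Node) := by
      ext C
      simp only [Set.mem_ofPred_eq, Finset.coe_filter]
      have := hp C
      tauto
    rw [this, Set.ncard_coe_finset, Finset.card_filter]
    push_cast
    apply Finset.sum_congr rfl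
    intro C _
    by_cases h1 : resNode e κ C = resNode e κ A ∧ nodeBelow A C
    · simp [h1]
    · simp only [h1, false_and, if_false]
  unfold dNode
  rw [key _ (add_mem_Win hS hM), key _ (fun C hC => mem_Win_of_mem hS hM C hC.1),
    ← Finset.sum_sub_distrib]
  apply Finset.sum_congr rfl
  intro C _
  unfold wt
  split_ifs <;> simp

theorem dNode_congr (hS : IsDiagramSet ℓ S) {M : ℕ} (hM : InBox M S) (e e' : ℕ) (κ κ' : ℕ → ℤ)
    (A : Node) (h : ∀ C ∈ Win ℓ M, resNode e κ C = resNode e κ A ↔ resNode e' κ' C = resNode e' κ' A) :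
    dNode ℓ e κ S A = dNode ℓ e' κ' S A := by
  rw [dNode_eq hS hM, dNode_eq hS hM]
  apply Finset.sum_congr rfl
  intro C hC
  simp only [h C hC]

theorem zmod_succ_ne (e : ℕ) (he : 2 ≤ e) (z : ZMod e) : z + 1 ≠ z := by
  intro h
  rw [add_eq_left] at h
  have : Fact (1 < e) := ⟨by omega⟩
  exact one_ne_zero h

theorem res_right (e : ℕ) (κ : ℕ → ℤ) (l i j : ℕ) :
    resNode e κ (l, i, j + 1) = resNode e κ (l, i, j) + 1 := by
  simp only [resNode]; push_cast; ring

theorem res_down (e : ℕ) (κ : ℕ → ℤ) (l i j : ℕ) :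
    resNode e κ (l, i + 1, j) + 1 = resNode e κ (l, i, j) := by
  simp only [resNode]; push_cast; ring

/-- Adding a node `A` above `B` does not alter `d_B`. -/
theorem dNode_above (e : ℕ) (he : 2 ≤ e) (κ : ℕ → ℤ) (hS : IsDiagramSet ℓ S) (A B : Node)
    (hSA : IsDiagramSet ℓ (S ∪ {A})) (hB : Removable ℓ S B) (hA : A ∉ S)
    (hAB : nodeBelow A B) (hinc : ¬ (A.1 = B.1 ∧ A.2.1 ≤ B.2.1 ∧ A.2.2 ≤ B.2.2)) :
    dNode ℓ e κ (S ∪ {A}) B = dNode ℓ e κ S B := by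
  obtain ⟨la, ia, ja⟩ := A
  obtain ⟨lb, ib, jb⟩ := B
  simp only [nodeBelow] at hAB hinc
  rw [rem_iff hS] at hB
  have h1 : ∀ C, resNode e κ C = resNode e κ (lb, ib, jb) → nodeBelow (lb, ib, jb) C →
      (Addable ℓ (S ∪ {(la, ia, ja)}) C ↔ Addable ℓ S C) := by
    rintro ⟨l, i, j⟩ hres hC
    simp only [nodeBelow] at hC
    rw [add_iff hS, add_iff hSA]
    simp only [Set.mem_union, Set.mem_singleton_iff, Prod.mk.injEq]
    constructor
    · rintro ⟨h1, h2, h3, h4⟩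
      refine ⟨fun h => h1 (Or.inl h), h2, ?_, ?_⟩
      · rintro i' rfl
        rcases h3 i' rfl with h | ⟨rfl, rfl, rfl⟩
        · exact h
        · exfalso
          have e1 : l = lb := by omega
          subst e1
          have e2 : ib = i' + 1 := by omega
          subst e2
          have e3 : jb < j := by omega
          have hj := h4 (j - 1) (by omega)
          have hj' : (l, i' + 1, j - 1) ∈ S := by
            rcases hj with h | h
            · exact h
            · omega
          have e4 : j = jb + 1 := by
            by_contra hne
            exact hB.2.2 (hS.down hj' le_rfl (by omega))
          subst e4
          apply zmod_succ_ne e he (resNode e κ (l, i' + 1, jb))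
          rw [← res_right]; exact hres
      · rintro j' rfl
        rcases h4 j' rfl with h | ⟨rfl, rfl, rfl⟩
        · exact h
        · omega
    · rintro ⟨h1, h2, h3, h4⟩
      refine ⟨?_, h2, fun i' h => Or.inl (h3 i' h), fun j' h => Or.inl (h4 j' h)⟩
      rintro (h | ⟨rfl, rfl, rfl⟩)
      · exact h1 h
      · omega
  have h2 : ∀ C, nodeBelow (lb, ib, jb) C →
      (Removable ℓ (S ∪ {(la, ia, ja)}) C ↔ Removable ℓ S C) := by
    rintro ⟨l, i, j⟩ hC
    simp only [nodeBelow] at hC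
    rw [rem_iff hS, rem_iff hSA]
    simp only [Set.mem_union, Set.mem_singleton_iff, Prod.mk.injEq]
    have n1 : ¬ (l = la ∧ i = ia ∧ j = ja) := by omega
    have n2 : ¬ (l = la ∧ i + 1 = ia ∧ j = ja) := by omega
    have n3 : ¬ (l = la ∧ i = ia ∧ j + 1 = ja) := by omega
    simp only [n1, n2, n3, or_false]
  unfold dNode
  congr 3
  · ext C
    simp only [Set.mem_ofPred_eq]
    have := h1 C
    tauto
  · ext C
    simp only [Set.mem_ofPred_eq]
    have := h2 C
    tauto

/-- The change of the signed indicator when a node is added. -/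
theorem wt_change (hS : IsDiagramSet ℓ S) (l i j : ℕ) (hB : Addable ℓ S (l, i, j)) (C : Node) :
    wt ℓ (S ∪ {(l, i, j)}) C - wt ℓ S C = (if C = (l, i, j) then -2 else 0) +
      (if C = (l, i, j + 1) then (if i = 0 ∨ (l, i - 1, j + 1) ∈ S then 1 else 0) else 0) +
      (if C = (l, i + 1, j) then (if j = 0 ∨ (l, i + 1, j - 1) ∈ S then 1 else 0) else 0) +
      (if C = (l, i - 1, j) then (if i = 0 ∨ (l, i - 1, j + 1) ∈ S then 0 else 1) else 0) +
      (if C = (l, i, j - 1) then (if j = 0 ∨ (l, i + 1, j - 1) ∈ S then 0 else 1) else 0) := by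
  have hS' := hB.2
  rw [add_iff2 hS] at hB
  obtain ⟨b1, b2, b3, b4⟩ := hB
  obtain ⟨l', i', j'⟩ := C
  have hmem : ∀ a b c : ℕ, (a, b, c) ∈ S ∪ {(l, i, j)} ↔ (a, b, c) ∈ S ∨ (a = l ∧ b = i ∧ c = j) := by
    intro a b c
    simp only [Set.mem_union, Set.mem_singleton_iff, Prod.mk.injEq]
  unfold wt
  rw [add_iff2 hS, add_iff2 hS', rem_iff hS, rem_iff hS']
  simp only [hmem, Prod.mk.injEq]
  have nR : ∀ c, j ≤ c → (l, i, c) ∉ S := fun c hc h => b1 (hS.down h le_rfl hc)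
  have nD : ∀ c, i ≤ c → (l, c, j) ∉ S := fun c hc h => b1 (hS.down h hc le_rfl)
  by_cases c1 : l' = l
  swap
  · simp only [c1, false_and, or_false, if_false, add_zero]
    refine sub_eq_zero.mpr ?_
    congr
  subst c1
  have n1 := nR (j + 1) (by omega)
  have n2 := nD (i + 1) (by omega)
  simp only [true_and, b2]
  clear hS hS' hmem nR nD b2
  by_cases c2 : i' = i ∧ j' = j
  · obtain ⟨rfl, rfl⟩ := c2
    cases i' <;> cases j' <;> simp_all
  by_cases c3 : i' = i ∧ j' = j + 1
  · obtain ⟨rfl, rfl⟩ := c3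
    cases i' <;> cases j <;> simp_all
    all_goals (intro h; omega)
  by_cases c4 : i' = i + 1 ∧ j' = j
  · obtain ⟨rfl, rfl⟩ := c4
    cases i <;> cases j' <;> simp_all
    all_goals (intro h; omega)
  by_cases c5 : i' + 1 = i ∧ j' = j
  · obtain ⟨rfl, rfl⟩ := c5
    cases i' <;> cases j' <;> simp_all
  by_cases c6 : i' = i ∧ j' + 1 = j
  · obtain ⟨rfl, rfl⟩ := c6
    cases i' <;> cases j' <;> simp_all
  have d1 : ¬ (i' + 1 = i ∧ j' = j) := c5
  have d3 : ¬ (i' - 1 = i ∧ j' = j) ∨ i' = 0 := by omega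
  have d4 : ¬ (i' = i ∧ j' - 1 = j) ∨ j' = 0 := by omega
  have d5 : ¬ (i' = i - 1 ∧ j' = j) := by omega
  have d6 : ¬ (i' = i ∧ j' = j - 1) := by omega
  have d7 : (i' = 0 ∨ ((l', i' - 1, j') ∈ S ∨ (i' - 1 = i ∧ j' = j))) ↔
      (i' = 0 ∨ (l', i' - 1, j') ∈ S) := by
    constructor
    · rintro (h | h | h)
      · exact Or.inl h
      · exact Or.inr h
      · exact Or.inl (by omega)
    · rintro (h | h)
      · exact Or.inl h
      · exact Or.inr (Or.inl h)
  have d8 : (j' = 0 ∨ ((l', i', j' - 1) ∈ S ∨ (i' = i ∧ j' - 1 = j))) ↔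
      (j' = 0 ∨ (l', i', j' - 1) ∈ S) := by
    constructor
    · rintro (h | h | h)
      · exact Or.inl h
      · exact Or.inr h
      · exact Or.inl (by omega)
    · rintro (h | h)
      · exact Or.inl h
      · exact Or.inr (Or.inl h)
  simp only [c2, c3, c4, c5, c6, d5, d6, d7, d8, or_false, if_false, add_zero]
  refine sub_eq_zero.mpr ?_
  congr

theorem dNode_below (e : ℕ) (κ : ℕ → ℤ) (hS : IsDiagramSet ℓ S) (A B : Node)
    (hB : Addable ℓ S B) (hA : A ∈ S)
    (hAB : nodeBelow A B) (hinc : ¬ (A.1 = B.1 ∧ A.2.1 ≤ B.2.1 ∧ A.2.2 ≤ B.2.2))  :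
    dNode ℓ e κ (S ∪ {B}) A = dNode ℓ e κ S A +
      ((if resNode e κ A + 1 = resNode e κ B then 1 else 0) +
       (if resNode e κ A = resNode e κ B + 1 then 1 else 0) -
        2 * (if resNode e κ A = resNode e κ B then 1 else 0)) := by
  obtain ⟨l, i, j⟩ := B
  obtain ⟨la, ia, ja⟩ := A
  simp only [nodeBelow] at hAB hinc
  have hS' := hB.2
  obtain ⟨M, hM⟩ : ∃ M, InBox M (S ∪ {(l, i, j)}) := by
    obtain ⟨M1, h1⟩ := (hS'.1.image (fun A : Node => A.2.1)).bddAbove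
    obtain ⟨M2, h2⟩ := (hS'.1.image (fun A : Node => A.2.2)).bddAbove
    refine ⟨M1 + M2 + 1, fun A hA => ?_⟩
    have e1 := h1 ⟨A, hA, rfl⟩
    have e2 := h2 ⟨A, hA, rfl⟩
    simp only at e1 e2
    omega
  have hM0 : InBox M S := fun A hA => hM A (Or.inl hA)
  rw [dNode_eq hS' hM, dNode_eq hS hM0, ← sub_eq_iff_eq_add', ← Finset.sum_sub_distrib]
  have hb := hM (l, i, j) (Or.inr rfl)
  simp only at hb
  have hl : l < ℓ := hS'.2.1 (l, i, j) (Or.inr rfl)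
  set P : Node → Prop := fun C => resNode e κ C = resNode e κ (la, ia, ja) ∧ nodeBelow (la, ia, ja) C
    with hP
  have e1 : ∀ C ∈ Win ℓ M, ((if resNode e κ C = resNode e κ (la, ia, ja) ∧ nodeBelow (la, ia, ja) C
        then wt ℓ (S ∪ {(l, i, j)}) C else 0) -
      (if resNode e κ C = resNode e κ (la, ia, ja) ∧ nodeBelow (la, ia, ja) C
        then wt ℓ S C else 0)) =
      (if C = (l, i, j) then (if P C then -2 else 0) else 0) +
      (if C = (l, i, j + 1) then (if P C then (if i = 0 ∨ (l, i - 1, j + 1) ∈ S then 1 else 0) else 0) else 0) +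
      (if C = (l, i + 1, j) then (if P C then (if j = 0 ∨ (l, i + 1, j - 1) ∈ S then 1 else 0) else 0) else 0) +
      (if C = (l, i - 1, j) then (if P C then (if i = 0 ∨ (l, i - 1, j + 1) ∈ S then 0 else 1) else 0) else 0) +
      (if C = (l, i, j - 1) then (if P C then (if j = 0 ∨ (l, i + 1, j - 1) ∈ S then 0 else 1) else 0) else 0) := by
    intro C _
    by_cases h : P C
    · have h' := h
      simp only [hP] at h'
      rw [if_pos h', if_pos h', wt_change hS l i j hB]
      simp only [h, if_true]
    · have h' := h
      simp only [hP] at h'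
      rw [if_neg h', if_neg h']
      simp only [h, if_false, ite_self, sub_self, add_zero]
  rw [Finset.sum_congr rfl e1]
  simp only [Finset.sum_add_distrib, Finset.sum_ite_eq', mem_Win]
  have w1 : l < ℓ ∧ i < M + 1 ∧ j < M + 1 := by omega
  have w2 : l < ℓ ∧ i < M + 1 ∧ j + 1 < M + 1 := by omega
  have w3 : l < ℓ ∧ i + 1 < M + 1 ∧ j < M + 1 := by omega
  have w4 : l < ℓ ∧ i - 1 < M + 1 ∧ j < M + 1 := by omega
  have w5 : l < ℓ ∧ i < M + 1 ∧ j - 1 < M + 1 := by omega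
  simp only [w1, w2, w3, w4, w5, and_self, if_true]
  set ra := resNode e κ (la, ia, ja) with hra
  set rb := resNode e κ (l, i, j) with hrb
  have p1 : P (l, i, j) ↔ ra = rb := by
    simp only [hP, nodeBelow, ← hrb]
    constructor
    · intro h; exact h.1.symm
    · intro h; exact ⟨h.symm, by omega⟩
  have p2 : P (l, i, j + 1) ↔ ra = rb + 1 := by
    simp only [hP, nodeBelow, res_right, ← hrb]
    constructor
    · intro h; exact h.1.symm
    · intro h; exact ⟨h.symm, by omega⟩
  have p3 : P (l, i + 1, j) ↔ ra + 1 = rb := by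
    simp only [hP, nodeBelow]
    have := res_down e κ l i j
    rw [← hrb] at this
    rw [← this]
    constructor
    · intro h; rw [h.1]
    · intro h; exact ⟨(add_right_cancel h).symm, by omega⟩
  have p4 : ¬ (i = 0 ∨ (l, i - 1, j + 1) ∈ S) → (P (l, i - 1, j) ↔ ra = rb + 1) := by
    intro hx
    push Not at hx
    simp only [hP, nodeBelow]
    have := res_down e κ l (i - 1) j
    rw [show i - 1 + 1 = i by omega, ← hrb] at this
    rw [← this]
    constructor
    · intro h; exact h.1.symm
    · intro h
      refine ⟨h.symm, ?_⟩
      by_contra hn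
      have q1 : la = l := by omega
      subst q1
      have q2 : ia = i - 1 := by omega
      subst q2
      exact hx.2 (hS.down hA le_rfl (by omega))
  have p5 : ¬ (j = 0 ∨ (l, i + 1, j - 1) ∈ S) → (P (l, i, j - 1) ↔ ra + 1 = rb) := by
    intro hx
    push Not at hx
    simp only [hP, nodeBelow]
    have := res_right e κ l i (j - 1)
    rw [show j - 1 + 1 = j by omega, ← hrb] at this
    rw [this]
    constructor
    · intro h; rw [h.1]
    · intro h; exact ⟨(add_right_cancel h).symm, by omega⟩
  simp only [p1, p2, p3]
  by_cases xr : (i = 0 ∨ (l, i - 1, j + 1) ∈ S) <;> by_cases xd : (j = 0 ∨ (l, i + 1, j - 1) ∈ S)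
  · simp only [xr, xd, if_true]
    split_ifs <;> norm_num
  · simp only [xr, xd, if_true, if_false, p5 xd]
    split_ifs <;> norm_num
  · simp only [xr, xd, if_true, if_false, p4 xr]
    split_ifs <;> norm_num
  · simp only [xr, xd, if_false, p4 xr, p5 xd]
    split_ifs <;> norm_num

end Comb
end Paper

namespace Paper
section Seq

/-- Componentwise order of nodes in the same component. -/
def cle (A B : Node) : Prop := A.1 = B.1 ∧ A.2.1 ≤ B.2.1 ∧ A.2.2 ≤ B.2.2

/-- Standard tableaux as sequences of nodes. -/
structure IsStd (n : ℕ) (Λ : Set Node) (a : ℕ → Node) : Prop where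
  dflt : ∀ i, n ≤ i → a i = (0, 0, 0)
  inj : ∀ i j, i < n → j < n → a i = a j → i = j
  mem : ∀ i, i < n → a i ∈ Λ
  surj : ∀ A ∈ Λ, ∃ i, i < n ∧ a i = A
  ord : ∀ i j, i < n → j < n → cle (a i) (a j) → i ≤ j

/-- The set of standard sequences. -/
def Stds (n : ℕ) (Λ : Set Node) : Set (ℕ → Node) := {a | IsStd n Λ a}

/-- The shape after `k` steps. -/
def Sk (a : ℕ → Node) (k : ℕ) : Set Node := {A | ∃ i, i < k ∧ a i = A}

theorem Sk_succ (a : ℕ → Node) (k : ℕ) : Sk a (k + 1) = Sk a k ∪ {a k} := by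
  ext A
  simp only [Sk, Set.mem_union, Set.mem_ofPred_eq, Set.mem_singleton_iff]
  constructor
  · rintro ⟨i, hi, rfl⟩
    rcases Nat.lt_succ_iff_lt_or_eq.mp hi with h | rfl
    · exact Or.inl ⟨i, h, rfl⟩
    · exact Or.inr rfl
  · rintro (⟨i, hi, rfl⟩ | rfl)
    · exact ⟨i, by omega, rfl⟩
    · exact ⟨k, by omega, rfl⟩

variable {ℓ n : ℕ} {Λ : Set Node} {a : ℕ → Node}

theorem IsStd.Sk_sub (ha : IsStd n Λ a) {k : ℕ} (hk : k ≤ n) : Sk a k ⊆ Λ := by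
  rintro A ⟨i, hi, rfl⟩
  exact ha.mem i (by omega)

theorem IsStd.Sk_diag (ha : IsStd n Λ a) (hΛ : IsDiagramSet ℓ Λ) {k : ℕ} (hk : k ≤ n) :
    IsDiagramSet ℓ (Sk a k) := by
  have hsub := ha.Sk_sub hk
  refine ⟨hΛ.1.subset hsub, fun A hA => hΛ.2.1 A (hsub hA), ?_, ?_⟩
  · rintro l r c ⟨i, hi, hA⟩
    have h1 : (l, r, c + 1) ∈ Λ := by rw [← hA]; exact ha.mem i (by omega)
    obtain ⟨j, hj, hj'⟩ := ha.surj _ (hΛ.2.2.1 _ _ _ h1)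
    have := ha.ord j i hj (by omega) (by rw [hj', hA]; simp [cle])
    exact ⟨j, by omega, hj'⟩
  · rintro l r c ⟨i, hi, hA⟩
    have h1 : (l, r + 1, c) ∈ Λ := by rw [← hA]; exact ha.mem i (by omega)
    obtain ⟨j, hj, hj'⟩ := ha.surj _ (hΛ.2.2.2 _ _ _ h1)
    have := ha.ord j i hj (by omega) (by rw [hj', hA]; simp [cle])
    exact ⟨j, by omega, hj'⟩

theorem IsStd.notMem (ha : IsStd n Λ a) {k : ℕ} (hk : k < n) : a k ∉ Sk a k := by
  rintro ⟨i, hi, h⟩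
  have := ha.inj i k (by omega) hk h
  omega

theorem IsStd.addable (ha : IsStd n Λ a) (hΛ : IsDiagramSet ℓ Λ) {k : ℕ} (hk : k < n) :
    Addable ℓ (Sk a k) (a k) :=
  ⟨ha.notMem hk, by rw [← Sk_succ]; exact ha.Sk_diag hΛ hk⟩

theorem IsStd.removable (ha : IsStd n Λ a) (hΛ : IsDiagramSet ℓ Λ) {k : ℕ} (hk : k < n) :
    Removable ℓ (Sk a (k + 1)) (a k) := by
  refine ⟨⟨k, by omega, rfl⟩, ?_⟩
  have : Sk a (k + 1) \ {a k} = Sk a k := by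
    rw [Sk_succ]
    ext A
    constructor
    · rintro ⟨h | h, h'⟩
      · exact h
      · exact absurd h h'
    · intro h
      refine ⟨Or.inl h, fun h' => ha.notMem hk ?_⟩
      rw [← (h' : A = a k)]; exact h
  rw [this]; exact ha.Sk_diag hΛ (by omega)

theorem IsStd.not_cle (ha : IsStd n Λ a) {r : ℕ} (hr : r + 1 < n) : ¬ cle (a (r + 1)) (a r) := by
  intro h
  have := ha.ord (r + 1) r hr (by omega) h
  omega

theorem IsStd.sw_iff (ha : IsStd n Λ a) {r : ℕ} (hr : r + 1 < n) :
    sw r a ∈ Stds n Λ ↔ ¬ cle (a r) (a (r + 1)) := by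
  constructor
  · intro h h'
    have := (h : IsStd n Λ (sw r a)).not_cle hr
    rw [sw_left, sw_right] at this
    exact this h'
  · intro h
    have hlt : ∀ i, i < n → Equiv.swap r (r + 1) i < n := by
      intro i hi
      rw [Equiv.swap_apply_def]; split_ifs <;> omega
    refine ⟨?_, ?_, ?_, ?_, ?_⟩
    · intro i hi
      rw [sw_ne _ _ _ (by omega) (by omega)]; exact ha.dflt i hi
    · intro i j hi hj hij
      exact (Equiv.swap r (r + 1)).injective (ha.inj _ _ (hlt i hi) (hlt j hj) hij)
    · intro i hi; exact ha.mem _ (hlt i hi)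
    · intro A hA
      obtain ⟨i, hi, rfl⟩ := ha.surj A hA
      exact ⟨_, hlt i hi, by simp [sw]⟩
    · intro i j hi hj hij
      have h1 := ha.ord _ _ (hlt i hi) (hlt j hj) hij
      by_contra hlt'
      have h2 : i = r + 1 ∧ j = r := by
        simp only [Equiv.swap_apply_def] at h1
        split_ifs at h1 <;> omega
      obtain ⟨rfl, rfl⟩ := h2
      rw [sw_left, sw_right] at hij
      exact h hij

theorem IsStd.between (ha : IsStd n Λ a) {r s : ℕ} (hr : r < n) (hs : s < n) (C : Node) (hC : C ∈ Λ)
    (h1 : cle (a r) C) (h2 : cle C (a s)) (h3 : C ≠ a r) (h4 : C ≠ a s) :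
    ∃ k, r < k ∧ k < s ∧ a k = C := by
  obtain ⟨k, hk, rfl⟩ := ha.surj C hC
  have e1 := ha.ord r k hr hk h1
  have e2 := ha.ord k s hk hs h2
  refine ⟨k, ?_, ?_, rfl⟩
  · rcases Nat.lt_or_ge r k with h | h
    · exact h
    · exact absurd (by rw [le_antisymm e1 h]) h3
  · rcases Nat.lt_or_ge k s with h | h
    · exact h
    · exact absurd (by rw [le_antisymm e2 h]) h4

/-- Comparable consecutive nodes are adjacent. -/
theorem IsStd.adjacent (ha : IsStd n Λ a) (hΛ : IsDiagramSet ℓ Λ) {r : ℕ} (hr : r + 1 < n)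
    (h : cle (a r) (a (r + 1))) :
    a (r + 1) = ((a r).1, (a r).2.1, (a r).2.2 + 1) ∨
      a (r + 1) = ((a r).1, (a r).2.1 + 1, (a r).2.2) := by
  have hne : a r ≠ a (r + 1) := fun h => by have := ha.inj _ _ (by omega) hr h; omega
  have hbt := fun C => ha.between (r := r) (s := r + 1) (by omega) hr C
  have hm := ha.mem _ hr
  generalize a (r + 1) = B at *
  generalize a r = A at *
  obtain ⟨l, i, j⟩ := A
  obtain ⟨l', i', j'⟩ := B
  simp only [cle, Prod.mk.injEq, ne_eq, true_and] at *
  obtain ⟨rfl, h2, h3⟩ := h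
  by_contra hcon
  have key : ∀ i1 j1, i ≤ i1 → i1 ≤ i' → j ≤ j1 → j1 ≤ j' → ¬ (i1 = i ∧ j1 = j) →
      ¬ (i1 = i' ∧ j1 = j') → False := by
    intro i1 j1 g1 g2 g3 g4 g5 g6
    obtain ⟨k, hk1, hk2, _⟩ := hbt (l, i1, j1) (hΛ.down hm g2 g4) ⟨rfl, g1, g3⟩ ⟨rfl, g2, g4⟩
      (by simpa using g5) (by simpa using g6)
    omega
  by_cases hj : j < j'
  · exact key i (j + 1) le_rfl h2 (by omega) (by omega) (by omega) (by omega)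
  · exact key (i + 1) j (by omega) (by omega) le_rfl h3 (by omega) (by omega)

/-- The content offset. -/
def off (A : Node) : ℤ := (A.2.2 : ℤ) - A.2.1

theorem IsStd.off_ne1 (ha : IsStd n Λ a) (hΛ : IsDiagramSet ℓ Λ) {r : ℕ} (hr : r + 1 < n)
    (hc : (a r).1 = (a (r + 1)).1) : off (a r) ≠ off (a (r + 1)) := by
  intro ho
  by_cases h : cle (a r) (a (r + 1))
  · rcases ha.adjacent hΛ hr h with h | h
    · rw [h] at ho; simp only [off] at ho; push_cast at ho; omega
    · rw [h] at ho; simp only [off] at ho; push_cast at ho; omega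
  · have h2 := ha.not_cle hr
    simp only [cle, off] at *
    omega

theorem IsStd.off_ne2 (ha : IsStd n Λ a) (hΛ : IsDiagramSet ℓ Λ) {r : ℕ} (hr : r + 2 < n)
    (hc : (a r).1 = (a (r + 2)).1) : off (a r) ≠ off (a (r + 2)) := by
  intro ho
  have hne : a r ≠ a (r + 2) := fun h => by have := ha.inj _ _ (by omega) hr h; omega
  have hbt := fun C => ha.between (r := r) (s := r + 2) (by omega) hr C
  have hm := ha.mem _ hr
  have hno : ¬ cle (a (r + 2)) (a r) := fun h => by
    have := ha.ord _ _ hr (by omega) h; omega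
  generalize a (r + 2) = B at *
  generalize a r = A at *
  obtain ⟨l, i, j⟩ := A
  obtain ⟨l', i', j'⟩ := B
  simp only [cle, Prod.mk.injEq, ne_eq, off] at *
  subst hc
  obtain ⟨k, hk1, hk2, hk⟩ := hbt (l, i, j') (hΛ.down hm (by omega) le_rfl) (by simp; omega)
    (by simp; omega) (by simp; omega) (by simp; omega)
  obtain ⟨k', hk1', hk2', hk'⟩ := hbt (l, i', j) (hΛ.down hm le_rfl (by omega)) (by simp; omega)
    (by simp; omega) (by simp; omega) (by simp; omega)
  have : k = k' := by omega
  subst this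
  rw [hk] at hk'
  simp at hk'
  omega

theorem IsStd.off_far (ha : IsStd n Λ a) {r : ℕ} (hr : r + 1 < n)
    (hs : sw r a ∈ Stds n Λ) (hc : (a r).1 = (a (r + 1)).1) :
    off (a r) ≠ off (a (r + 1)) ∧ off (a r) + 1 ≠ off (a (r + 1)) ∧
      off (a r) ≠ off (a (r + 1)) + 1 := by
  have h1 := (ha.sw_iff hr).mp hs
  have h2 := ha.not_cle hr
  simp only [cle, off] at *
  omega

theorem nodeBelow_total (A B : Node) (h : A ≠ B) : nodeBelow A B ∨ nodeBelow B A := by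
  obtain ⟨l, i, j⟩ := A
  obtain ⟨l', i', j'⟩ := B
  simp only [nodeBelow, Prod.mk.injEq, ne_eq] at *
  omega

theorem nodeBelow_asymm (A B : Node) (h : nodeBelow A B) : ¬ nodeBelow B A := by
  simp only [nodeBelow] at *
  omega

theorem nodeBelow_trans {A B C : Node} (h : nodeBelow A B) (h' : nodeBelow B C) : nodeBelow A C := by
  simp only [nodeBelow] at *
  omega

theorem cle_below (A B : Node) (h : cle A B) (hne : A ≠ B) : nodeBelow A B := by
  obtain ⟨l, i, j⟩ := A
  obtain ⟨l', i', j'⟩ := B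
  simp only [nodeBelow, cle, Prod.mk.injEq, ne_eq] at *
  omega

theorem Sk_sw_le (r k : ℕ) (hk : k ≤ r) : Sk (sw r a) k = Sk a k := by
  ext A
  constructor
  · rintro ⟨i, hi, rfl⟩
    exact ⟨i, hi, (sw_ne _ _ _ (by omega) (by omega)).symm⟩
  · rintro ⟨i, hi, rfl⟩
    exact ⟨i, hi, sw_ne _ _ _ (by omega) (by omega)⟩

theorem Sk_sw_two (r : ℕ) : Sk (sw r a) (r + 2) = Sk a (r + 2) := by
  rw [Sk_succ, Sk_succ, Sk_succ a (r + 1), Sk_succ a r, Sk_sw_le r r le_rfl, sw_left, sw_right,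
    Set.union_assoc, Set.union_assoc, Set.union_comm {a (r + 1)}]

theorem Sk_sw_ge (r k : ℕ) (hk : r + 2 ≤ k) : Sk (sw r a) k = Sk a k := by
  induction k, hk using Nat.le_induction with
  | base => exact Sk_sw_two r
  | succ k hk ih => rw [Sk_succ, Sk_succ, ih, sw_ne _ _ _ (by omega) (by omega)]

/-- The degree of a standard sequence. -/
noncomputable def degSeq (ℓ n e : ℕ) (κ : ℕ → ℤ) (a : ℕ → Node) : ℤ :=
  ∑ k ∈ Finset.range n, dNode ℓ e κ (Sk a (k + 1)) (a k)

/-- The change of degree. -/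
noncomputable def phi (e : ℕ) (κ : ℕ → ℤ) (A B : Node) : ℤ :=
  ((if resNode e κ A + 1 = resNode e κ B then 1 else 0) +
       (if resNode e κ A = resNode e κ B + 1 then 1 else 0) -
        2 * (if resNode e κ A = resNode e κ B then 1 else 0))

theorem IsStd.deg_sw (ha : IsStd n Λ a) (hΛ : IsDiagramSet ℓ Λ) (e : ℕ) (he : 2 ≤ e) (κ : ℕ → ℤ)
    {r : ℕ} (hr : r + 1 < n) (hs : sw r a ∈ Stds n Λ) (hb : nodeBelow (a r) (a (r + 1))) :
    degSeq ℓ n e κ (sw r a) = degSeq ℓ n e κ a + phi e κ (a r) (a (r + 1)) := by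
  have hs' : IsStd n Λ (sw r a) := hs
  have hinc := (ha.sw_iff hr).mp hs
  have h0 := ha.addable hΛ hr
  have g1 := dNode_below e κ (ha.Sk_diag hΛ (k := r + 1) (by omega)) (a r) (a (r + 1)) h0
    ⟨r, by omega, rfl⟩ hb hinc
  have e1 : Sk (sw r a) (r + 1) ∪ {a r} = Sk a (r + 2) := by
    rw [← Sk_sw_two, Sk_succ (sw r a) (r + 1), sw_right]
  have g2 := dNode_above e he κ (hs'.Sk_diag hΛ (k := r + 1) (by omega)) (a r) (a (r + 1))
    (by rw [e1]; exact ha.Sk_diag hΛ (by omega))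
    (by have := hs'.removable hΛ (k := r) (by omega); rwa [sw_left] at this)
    (by have := hs'.notMem (k := r + 1) hr; rwa [sw_right] at this) hb hinc
  rw [e1] at g2
  rw [← Sk_succ] at g1
  have key : ∑ k ∈ Finset.range n, (dNode ℓ e κ (Sk (sw r a) (k + 1)) (sw r a k) -
      dNode ℓ e κ (Sk a (k + 1)) (a k)) = phi e κ (a r) (a (r + 1)) := by
    rw [← Finset.sum_subset (s₁ := {r, r + 1})]
    · rw [Finset.sum_pair (by omega)]
      rw [Sk_sw_ge r (r + 1 + 1) (by omega), sw_left, sw_right, g1, ← g2]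
      unfold phi
      ring
    · intro k hk
      simp only [Finset.mem_insert, Finset.mem_singleton] at hk
      simp only [Finset.mem_range]; omega
    · intro k _ hk
      simp only [Finset.mem_insert, Finset.mem_singleton, not_or] at hk
      rw [sw_ne _ _ _ hk.1 hk.2, sub_eq_zero]
      rcases Nat.lt_or_ge k r with h | h
      · rw [Sk_sw_le r (k + 1) (by omega)]
      · rw [Sk_sw_ge r (k + 1) (by omega)]
  rw [Finset.sum_sub_distrib] at key
  unfold degSeq
  linarith

theorem Stds_finite (hΛ : Λ.Finite) : Finite (Stds n Λ) := by
  have := hΛ.to_subtype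
  apply Finite.of_injective
    (fun a : Stds n Λ => (fun i : Fin n => (⟨a.1 i.1, (a.2 : IsStd n Λ a.1).mem _ i.2⟩ : Λ)))
  intro a b hab
  apply Subtype.ext
  funext i
  by_cases hi : i < n
  · have := congrFun hab ⟨i, hi⟩
    exact congrArg Subtype.val this
  · rw [(a.2 : IsStd n Λ a.1).dflt i (by omega), (b.2 : IsStd n Λ b.1).dflt i (by omega)]

end Seq
end Paper

namespace Paper

section Inversions

variable {n ℓ : ℕ} {Λ : Set Node} {a : ℕ → Node}

/-- The inversions of a sequence. -/
noncomputable def inv (n : ℕ) (a : ℕ → Node) : Finset (ℕ × ℕ) :=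
  (Finset.range n ×ˢ Finset.range n).filter (fun p => p.1 < p.2 ∧ nodeBelow (a p.2) (a p.1))

theorem mem_inv (a : ℕ → Node) (i j : ℕ) :
    (i, j) ∈ inv n a ↔ i < n ∧ j < n ∧ i < j ∧ nodeBelow (a j) (a i) := by
  simp [inv, and_assoc]

theorem inv_sw (a : ℕ → Node) (r : ℕ) (hr : r + 1 < n) (h : nodeBelow (a r) (a (r + 1))) :
    inv n (sw r a) = insert (r, r + 1)
      ((inv n a).map (Equiv.prodCongr (Equiv.swap r (r + 1)) (Equiv.swap r (r + 1))).toEmbedding) := by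
  have h' := nodeBelow_asymm _ _ h
  ext ⟨i, j⟩
  rw [Finset.mem_insert, Finset.mem_map_equiv]
  simp only [Equiv.prodCongr_symm, Equiv.symm_swap, Equiv.prodCongr_apply, Prod.map_apply]
  rw [mem_inv, mem_inv, Prod.mk.injEq]
  unfold sw
  by_cases hi : i = r
  · subst hi
    by_cases hj : j = i + 1
    · subst hj
      simp only [Equiv.swap_apply_right, Equiv.swap_apply_left]
      have : i < n := by omega
      simp [h, hr, this]
    · by_cases hj' : j = i
      · subst hj'; simp
      · rw [Equiv.swap_apply_left, Equiv.swap_apply_of_ne_of_ne hj' hj]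
        have : i < j ↔ i + 1 < j := by omega
        have h2 : i < n ↔ i + 1 < n := by omega
        simp [hj, this, h2]
  · by_cases hi' : i = r + 1
    · subst hi'
      by_cases hj : j = r + 1
      · subst hj; simp
      · by_cases hj' : j = r
        · subst hj'
          simp only [Equiv.swap_apply_right, Equiv.swap_apply_left]
          simp [h']
        · rw [Equiv.swap_apply_right, Equiv.swap_apply_of_ne_of_ne hj' hj]
          have : r < j ↔ r + 1 < j := by omega
          have h2 : r < n ↔ r + 1 < n := by omega
          simp [hj, this, h2]
    · rw [Equiv.swap_apply_of_ne_of_ne hi hi']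
      by_cases hj : j = r + 1
      · subst hj
        rw [Equiv.swap_apply_right]
        have : i < r ↔ i < r + 1 := by omega
        have h2 : r < n ↔ r + 1 < n := by omega
        simp [hi, this, h2]
      · by_cases hj' : j = r
        · subst hj'
          rw [Equiv.swap_apply_left]
          have : i < j ↔ i < j + 1 := by omega
          have h2 : j < n ↔ j + 1 < n := by omega
          simp [hi, this, h2]
        · rw [Equiv.swap_apply_of_ne_of_ne hj' hj]
          simp [hi]

theorem inv_sw_notMem (a : ℕ → Node) (r : ℕ) :
    (r, r + 1) ∉ ((inv n a).map
      (Equiv.prodCongr (Equiv.swap r (r + 1)) (Equiv.swap r (r + 1))).toEmbedding) := by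
  rw [Finset.mem_map_equiv]
  simp only [Equiv.prodCongr_symm, Equiv.symm_swap, Equiv.prodCongr_apply, Prod.map_apply]
  rw [mem_inv]
  simp

theorem inv_card (a : ℕ → Node) (r : ℕ) (hr : r + 1 < n) (h : nodeBelow (a r) (a (r + 1))) :
    (inv n (sw r a)).card = (inv n a).card + 1 := by
  rw [inv_sw a r hr h, Finset.card_insert_of_notMem (inv_sw_notMem a r), Finset.card_map]

theorem inv_prod {R : Type*} [CommMonoid R] (f : Node → Node → R) (a : ℕ → Node) (r : ℕ)
    (hr : r + 1 < n) (h : nodeBelow (a r) (a (r + 1))) :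
    ∏ p ∈ inv n (sw r a), f (sw r a p.1) (sw r a p.2) =
      f (a (r + 1)) (a r) * ∏ p ∈ inv n a, f (a p.1) (a p.2) := by
  rw [inv_sw a r hr h, Finset.prod_insert (inv_sw_notMem a r), Finset.prod_map]
  simp only [sw_left, sw_right]
  congr 1
  apply Finset.prod_congr rfl
  intro p _
  simp [sw]

/-- A sequence without descents. -/
def Sorted (n : ℕ) (a : ℕ → Node) : Prop := ∀ r, r + 1 < n → nodeBelow (a r) (a (r + 1))

theorem Sorted.lt {a : ℕ → Node} (h : Sorted n a) (i j : ℕ) (hij : i < j) (hj : j < n) :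
    nodeBelow (a i) (a j) := by
  induction j, hij using Nat.le_induction with
  | base => exact h i hj
  | succ j hij ih => exact nodeBelow_trans (ih (by omega)) (h j hj)

theorem IsStd.ne (ha : IsStd n Λ a) {i j : ℕ} (hi : i < n) (hj : j < n) (h : i ≠ j) : a i ≠ a j :=
  fun heq => h (ha.inj i j hi hj heq)

/-- At a descent one may swap. -/
theorem IsStd.descent (ha : IsStd n Λ a) {r : ℕ} (hr : r + 1 < n)
    (h : ¬ nodeBelow (a r) (a (r + 1))) :
    nodeBelow (a (r + 1)) (a r) ∧ sw r a ∈ Stds n Λ ∧ (inv n (sw r a)).card + 1 = (inv n a).card := by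
  have hne := ha.ne (i := r) (j := r + 1) (by omega) hr (by omega)
  have hd : nodeBelow (a (r + 1)) (a r) := (nodeBelow_total _ _ hne).resolve_left h
  refine ⟨hd, (ha.sw_iff hr).mpr fun hc => h (cle_below _ _ hc hne), ?_⟩
  have := inv_card (n := n) (sw r a) r hr (by rwa [sw_left, sw_right])
  rw [sw_sw] at this
  exact this.symm

theorem exists_sorted (h : ∃ a, IsStd n Λ a) : ∃ a, IsStd n Λ a ∧ Sorted n a := by
  obtain ⟨a, ha⟩ := h
  generalize hk : (inv n a).card = k
  induction k generalizing a with
  | zero =>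
    refine ⟨a, ha, fun r hr => ?_⟩
    by_contra hc
    have := (ha.descent hr hc).2.2
    omega
  | succ k ih =>
    by_cases hs : Sorted n a
    · exact ⟨a, ha, hs⟩
    · unfold Sorted at hs
      push Not at hs
      obtain ⟨r, hr, hc⟩ := hs
      obtain ⟨h1, h2, h3⟩ := ha.descent hr hc
      exact ih _ h2 (by omega)

/-- First difference with the sorted sequence. -/
theorem first_diff {t t0 : ℕ → Node} (ht : IsStd n Λ t) (h0 : IsStd n Λ t0) (hs : Sorted n t0)
    (hne : t ≠ t0) : ∃ k, k < n ∧ (∀ i < k, t i = t0 i) ∧ nodeBelow (t0 k) (t k) ∧ t k ∈ Λ := by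
  have hex : ∃ k, t k ≠ t0 k := by
    by_contra hc
    push Not at hc
    exact hne (funext hc)
  have hk := Nat.find_spec hex
  have hmin : ∀ i < Nat.find hex, t i = t0 i := fun i hi => by
    have := Nat.find_min hex hi
    simpa using this
  set k := Nat.find hex
  have hkn : k < n := by
    by_contra hc
    exact hk (by rw [ht.dflt k (by omega), h0.dflt k (by omega)])
  refine ⟨k, hkn, hmin, ?_, ht.mem k hkn⟩
  obtain ⟨j, hj, hj'⟩ := h0.surj _ (ht.mem k hkn)
  have hjk : k < j := by
    rcases lt_trichotomy j k with h | h | h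
    · have := hmin j h
      rw [hj'] at this
      have := ht.inj _ _ (by omega) hkn this
      omega
    · subst h; exact absurd hj'.symm hk
    · exact h
  rw [← hj']
  exact hs.lt k j hjk hj

theorem sorted_unique {t t0 : ℕ → Node} (ht : IsStd n Λ t) (h0 : IsStd n Λ t0) (hs : Sorted n t0)
    (hs' : Sorted n t) : t = t0 := by
  by_contra hne
  obtain ⟨k, hk, h1, h2, _⟩ := first_diff ht h0 hs hne
  obtain ⟨k', hk', h1', h2', _⟩ := first_diff h0 ht hs' (Ne.symm hne)
  rcases lt_trichotomy k k' with h | rfl | h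
  · rw [h1' k h] at h2
    exact nodeBelow_asymm _ _ h2 h2
  · exact nodeBelow_asymm _ _ h2 h2'
  · rw [h1 k' h] at h2'
    exact nodeBelow_asymm _ _ h2' h2'

theorem Sk_congr {t t0 : ℕ → Node} {k : ℕ} (h : ∀ i < k, t i = t0 i) : Sk t k = Sk t0 k := by
  ext A
  constructor
  · rintro ⟨i, hi, rfl⟩; exact ⟨i, hi, (h i hi).symm⟩
  · rintro ⟨i, hi, rfl⟩; exact ⟨i, hi, h i hi⟩

/-- Two different addable nodes: one stays addable after adding the other. -/
theorem Addable.other {S : Set Node} (hS : IsDiagramSet ℓ S) {A B : Node} (hA : Addable ℓ S A)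
    (hB : Addable ℓ S B) (hne : A ≠ B) : Addable ℓ (S ∪ {A}) B := by
  obtain ⟨l, i, j⟩ := B
  rw [add_iff hA.2]
  rw [add_iff hS] at hB
  obtain ⟨h1, h2, h3, h4⟩ := hB
  refine ⟨?_, h2, fun i' hi => Or.inl (h3 i' hi), fun j' hj => Or.inl (h4 j' hj)⟩
  rintro (h | h)
  · exact h1 h
  · exact hne (by simpa using h.symm)

end Inversions
end Paper

namespace Paper

section Thm1

variable {n ℓ : ℕ} {Λ : Set Node} {a : ℕ → Node}

/-- The content. -/
def cont (κ : ℕ → ℤ) (A : Node) : ℤ := κ A.1 + off A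

theorem res_cont (e : ℕ) (κ : ℕ → ℤ) (A : Node) : resNode e κ A = ((cont κ A : ℤ) : ZMod e) := by
  simp only [resNode, cont, off]
  congr 1
  ring

/-- The components are far apart. -/
def Sep (κ : ℕ → ℤ) (ℓ M : ℕ) : Prop :=
  ∀ l l', l < ℓ → l' < ℓ → l ≠ l' → κ l - κ l' > 2 * M + 5 ∨ κ l' - κ l > 2 * M + 5

theorem cont_ne {κ : ℕ → ℤ} {M : ℕ} (hκ : Sep κ ℓ M) {A B : Node} (hA : A ∈ Win ℓ M)
    (hB : B ∈ Win ℓ M) (d : ℤ) (h1 : -1 ≤ d) (h2 : d ≤ 1) (h : A.1 = B.1 → off A + d ≠ off B) :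
    cont κ A + d ≠ cont κ B := by
  obtain ⟨l, i, j⟩ := A
  obtain ⟨l', i', j'⟩ := B
  rw [mem_Win] at hA hB
  by_cases hl : l = l'
  · subst hl
    have := h rfl
    simp only [cont] at *
    omega
  · have := hκ l l' hA.1 hB.1 hl
    simp only [cont, off]
    omega

/-- The structure constants. -/
noncomputable def rho (e : ℕ) (κ : ℕ → ℤ) (A B : Node) : KK :=
  ((qp e (cont κ A + 1) - qp e (cont κ B)) * (qp e (cont κ A) - qp e (cont κ B + 1))) /
    (qp e (cont κ A) - qp e (cont κ B)) ^ 2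

theorem rho_symm (e : ℕ) (κ : ℕ → ℤ) (A B : Node) : rho e κ A B = rho e κ B A := by
  unfold rho
  congr 1 <;> ring

theorem rho_val (e : ℕ) (he : 2 ≤ e) (κ : ℕ → ℤ) (A B : Node) (h0 : cont κ A ≠ cont κ B)
    (h1 : cont κ A + 1 ≠ cont κ B) (h2 : cont κ A ≠ cont κ B + 1) :
    Val (rho e κ A B) (phi e κ A B) := by
  have e0 := qp_sub e he _ _ h0
  have e1 := qp_sub e he _ _ h1
  have e2 := qp_sub e he _ _ h2
  have := (e1.mul e2).mul (e0.mul e0).inv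
  unfold rho phi
  rw [div_eq_mul_inv, pow_two]
  convert this using 1
  rw [res_cont, res_cont]
  push_cast
  ring

/-- The seminormal data. -/
noncomputable def theSD (e : ℕ) (he : 2 ≤ e) (κ : ℕ → ℤ) {M : ℕ} (hκ : Sep κ ℓ M) (n : ℕ)
    (hΛ : IsDiagramSet ℓ Λ) (hM : InBox M Λ) : SD Node OO KK where
  n := n
  St := Stds n Λ
  fin := Stds_finite hΛ.1
  q := qp e 1
  x := fun A => qp e (cont κ A)
  b := fun A B => if nodeBelow B A then 1 else rho e κ A B
  hq := qp_range _ _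
  hx := fun A => qp_range _ _
  hb := by
    intro A B hAB
    have hne : A ≠ B := fun h => hAB (by rw [h])
    have h0 : (qp e (cont κ A) - qp e (cont κ B)) ≠ 0 := sub_ne_zero.mpr hAB
    have key : rho e κ A B * (qp e (cont κ A) - qp e (cont κ B)) ^ 2 =
        (qp e 1 * qp e (cont κ A) - qp e (cont κ B)) * (qp e (cont κ A) - qp e 1 * qp e (cont κ B)) := by
      unfold rho
      rw [div_mul_cancel₀ _ (pow_ne_zero 2 h0), qp_add, qp_add, mul_comm (qp e 1),
        mul_comm (qp e 1)]
    rcases nodeBelow_total A B hne with h | h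
    · rw [if_neg (nodeBelow_asymm _ _ h), if_pos h, mul_one, key]
    · rw [if_pos h, if_neg (nodeBelow_asymm _ _ h), one_mul, rho_symm, key]
  h1 := by
    intro a ha r hr hs
    have ha : IsStd n Λ a := ha
    rw [ha.sw_iff hr, not_not] at hs
    have hb := cle_below _ _ hs (ha.ne (by omega) hr (by omega))
    rw [if_neg (nodeBelow_asymm _ _ hb)]
    unfold rho
    rcases ha.adjacent hΛ hr hs with h | h
    · have : cont κ (a r) + 1 = cont κ (a (r + 1)) := by
        rw [h]; simp only [cont, off]; push_cast; ring
      rw [this]; simp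
    · have : cont κ (a r) = cont κ (a (r + 1)) + 1 := by
        rw [h]; simp only [cont, off]; push_cast; ring
      rw [← this]; simp
  h2 := by
    intro a ha r hr hx
    have ha : IsStd n Λ a := ha
    have hx := qp_inj e he _ _ hx
    refine cont_ne hκ (mem_Win_of_mem hΛ hM _ (ha.mem r (by omega)))
      (mem_Win_of_mem hΛ hM _ (ha.mem (r + 1) hr)) 0 (by omega) (by omega) ?_ (by simpa using hx)
    intro hc
    rw [add_zero]
    exact ha.off_ne1 hΛ hr hc
  h3 := by
    intro a ha r hr hx
    have ha : IsStd n Λ a := ha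
    have hx := qp_inj e he _ _ hx
    refine cont_ne hκ (mem_Win_of_mem hΛ hM _ (ha.mem r (by omega)))
      (mem_Win_of_mem hΛ hM _ (ha.mem (r + 2) hr)) 0 (by omega) (by omega) ?_ (by simpa using hx)
    intro hc
    rw [add_zero]
    exact ha.off_ne2 hΛ hr hc

/-- The relations cutting out the first tableau. -/
noncomputable def theP (ℓ n M : ℕ) (t : ℕ → Node) : Finset (ℕ × Node) :=
  (Finset.range n ×ˢ Win ℓ M).filter
    (fun p => Addable ℓ (Sk t (p.1 + 1)) p.2 ∧ nodeBelow (t p.1) p.2)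

/-- The value at the first tableau. -/
noncomputable def s0 (e : ℕ) (κ : ℕ → ℤ) (ℓ n M : ℕ) (t : ℕ → Node) : KK :=
  ∏ p ∈ theP ℓ n M t, (qp e (cont κ (t p.1)) - qp e (cont κ p.2))

theorem rem_add_off {S : Set Node} (hS : IsDiagramSet ℓ S) (A B : Node) (hA : Removable ℓ S A)
    (hB : Addable ℓ S B) (hc : A.1 = B.1) : off A ≠ off B := by
  obtain ⟨l, i, j⟩ := A
  obtain ⟨l', i', j'⟩ := B
  simp only at hc
  subst hc
  rw [rem_iff hS] at hA
  rw [add_iff2 hS] at hB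
  simp only [off]
  intro h
  by_cases hi : i' ≤ i
  · exact hB.1 (hS.down hA.1 hi (by omega))
  · rcases hB.2.2.1 with h' | h'
    · omega
    · exact hA.2.2 (hS.down h' (by omega) (by omega))

theorem s0_val (e : ℕ) (he : 2 ≤ e) (κ : ℕ → ℤ) {M : ℕ} (hκ : Sep κ ℓ M)
    (hΛ : IsDiagramSet ℓ Λ) (hM : InBox M Λ) {t : ℕ → Node} (ht : IsStd n Λ t) (hs : Sorted n t) :
    Val (s0 e κ ℓ n M t) (degSeq ℓ n e κ t) := by
  have h1 : degSeq ℓ n e κ t = ∑ p ∈ theP ℓ n M t,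
      if ((cont κ (t p.1) : ℤ) : ZMod e) = ((cont κ p.2 : ℤ) : ZMod e) then (1 : ℤ) else 0 := by
    unfold degSeq theP
    rw [Finset.sum_filter, Finset.sum_product]
    apply Finset.sum_congr rfl
    intro k hk
    have hk : k < n := by simpa using hk
    rw [dNode_eq (ht.Sk_diag hΛ (k := k + 1) hk) (M := M)
      (fun A hA => hM A (ht.Sk_sub (k := k + 1) hk hA))]
    apply Finset.sum_congr rfl
    intro C _
    simp only [res_cont]
    by_cases hb : nodeBelow (t k) C
    · have hnr : ¬ Removable ℓ (Sk t (k + 1)) C := by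
        rintro ⟨⟨i, hi, rfl⟩, _⟩
        rcases Nat.lt_succ_iff_lt_or_eq.mp hi with h | rfl
        · exact nodeBelow_asymm _ _ hb (hs.lt i k h hk)
        · exact nodeBelow_asymm _ _ hb hb
      simp only [hb, and_true, wt, hnr, if_false, sub_zero]
      simp only [eq_comm (a := ((cont κ C : ℤ) : ZMod e))]
      split_ifs <;> rfl
    · simp [hb]
  rw [h1]
  unfold s0
  apply Val.prod
  rintro ⟨k, B⟩ hp
  simp only [theP, Finset.mem_filter, Finset.mem_product, Finset.mem_range] at hp
  obtain ⟨⟨hk, hB⟩, hadd, hbel⟩ := hp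
  apply qp_sub e he
  have := cont_ne hκ (mem_Win_of_mem hΛ hM _ (ht.mem k hk)) hB 0 (by omega) (by omega) (by
    intro hc
    rw [add_zero]
    exact rem_add_off (ht.Sk_diag hΛ (k := k + 1) hk) _ _ (ht.removable hΛ hk) hadd hc)
  simpa using this

/-- The coefficients `γ_t`. -/
noncomputable def gam (e : ℕ) (κ : ℕ → ℤ) (n : ℕ) (s : KK) (t : ℕ → Node) : KK :=
  s * ∏ p ∈ inv n t, rho e κ (t p.1) (t p.2)

theorem gam_sw (e : ℕ) (κ : ℕ → ℤ) (n : ℕ) (s : KK) (t : ℕ → Node) (r : ℕ) (hr : r + 1 < n)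
    (h : nodeBelow (t r) (t (r + 1))) :
    gam e κ n s (sw r t) = gam e κ n s t * rho e κ (t r) (t (r + 1)) := by
  unfold gam
  rw [inv_prod (rho e κ) t r hr h, rho_symm e κ (t (r + 1))]
  ring

theorem gam_sorted (e : ℕ) (κ : ℕ → ℤ) (n : ℕ) (s : KK) (t : ℕ → Node) (hs : Sorted n t) :
    gam e κ n s t = s := by
  have : inv n t = ∅ := by
    rw [Finset.eq_empty_iff_forall_notMem]
    rintro ⟨i, j⟩ h
    rw [mem_inv] at h
    exact nodeBelow_asymm _ _ h.2.2.2 (hs.lt i j h.2.2.1 h.2.1)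
  simp [gam, this]

theorem gam_val (e : ℕ) (he : 2 ≤ e) (κ : ℕ → ℤ) {M : ℕ} (hκ : Sep κ ℓ M)
    (hΛ : IsDiagramSet ℓ Λ) (hM : InBox M Λ) {t0 : ℕ → Node} (ht0 : IsStd n Λ t0)
    (hs : Sorted n t0) (t : ℕ → Node) (ht : IsStd n Λ t) :
    Val (gam e κ n (s0 e κ ℓ n M t0) t) (degSeq ℓ n e κ t) := by
  generalize hk : (inv n t).card = k
  induction k using Nat.strong_induction_on generalizing t with
  | _ k ih =>
  by_cases hst : Sorted n t
  · rw [sorted_unique ht ht0 hs hst, gam_sorted _ _ _ _ _ hs]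
    exact s0_val e he κ hκ hΛ hM ht0 hs
  · unfold Sorted at hst
    push Not at hst
    obtain ⟨r, hr, hc⟩ := hst
    obtain ⟨g1, g2, g3⟩ := ht.descent hr hc
    have hu : IsStd n Λ (sw r t) := g2
    have ihu := ih _ (by omega) (sw r t) hu rfl
    obtain ⟨u, hu'⟩ : ∃ u, u = sw r t := ⟨_, rfl⟩
    have htu : t = sw r u := by rw [hu', sw_sw]
    have hb : nodeBelow (u r) (u (r + 1)) := by rw [hu', sw_left, sw_right]; exact g1
    rw [← hu'] at ihu hu
    have hsu : sw r u ∈ Stds n Λ := by rw [← htu]; exact ht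
    rw [htu, gam_sw _ _ _ _ _ _ hr hb, hu.deg_sw hΛ e he κ hr hsu hb]
    have w1 := mem_Win_of_mem hΛ hM _ (hu.mem r (by omega))
    have w2 := mem_Win_of_mem hΛ hM _ (hu.mem (r + 1) hr)
    have f := hu.off_far hr hsu
    apply ihu.mul
    apply rho_val e he
    · simpa using cont_ne hκ w1 w2 0 (by omega) (by omega) (fun hc => by simpa using (f hc).1)
    · exact cont_ne hκ w1 w2 1 (by omega) (by omega) (fun hc => (f hc).2.1)
    · intro h
      exact cont_ne hκ w1 w2 (-1) (by omega) (by omega)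
        (fun hc h => (f hc).2.2 (by omega)) (by omega)

theorem thm1 (e : ℕ) (he : 2 ≤ e) (κ : ℕ → ℤ) {M : ℕ} (hκ : Sep κ ℓ M) [Fintype (Stds n Λ)]
    (hΛ : IsDiagramSet ℓ Λ) (hM : InBox M Λ) :
    0 ≤ ∑ t : Stds n Λ, degSeq ℓ n e κ t.1 := by
  by_cases hex : ∃ t, IsStd n Λ t
  swap
  · have : IsEmpty (Stds n Λ) := ⟨fun t => hex ⟨t.1, t.2⟩⟩
    simp
  obtain ⟨t0, ht0, hs0⟩ := exists_sorted hex
  have hval := Val.prod Finset.univ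
    (fun t : Stds n Λ => gam e κ n (s0 e κ ℓ n M t0) t.1) (fun t => degSeq ℓ n e κ t.1)
    (fun t _ => gam_val e he κ hκ hΛ hM ht0 hs0 t.1 t.2)
  refine hval.nonneg ?_
  let D := theSD e he κ hκ n hΛ hM
  letI : Fintype D.St := ‹Fintype (Stds n Λ)›
  have hmain := SD.main D ⟨t0, ht0⟩ (theP ℓ n M t0) ?_
    (fun t => gam e κ n (s0 e κ ℓ n M t0) t.1) ?_ ?_ (fun t => (inv n t.1).card) ?_ ?_
  · exact hmain
  · rintro ⟨t, ht⟩ hne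
    have ht : IsStd n Λ t := ht
    have hne : t ≠ t0 := fun h => hne (Subtype.ext h)
    obtain ⟨k, hk, h1, h2, h3⟩ := first_diff ht ht0 hs0 hne
    apply Finset.prod_eq_zero (i := (k, t k))
    · simp only [theP, Finset.mem_filter, Finset.mem_product, Finset.mem_range]
      refine ⟨⟨hk, mem_Win_of_mem hΛ hM _ h3⟩, ?_, h2⟩
      rw [Sk_succ]
      have := ht.addable hΛ hk
      rw [Sk_congr h1] at this
      exact (ht0.addable hΛ hk).other (ht0.Sk_diag hΛ hk.le) this
        (fun h => nodeBelow_asymm _ _ h2 (by rw [← h]; rw [← h] at h2; exact h2))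
    · simp
  · exact gam_sorted _ _ _ _ _ hs0
  · intro r hr a h
    have hr : r + 1 < n := hr
    have ha : IsStd n Λ a.1 := a.2
    have hne := ha.ne (i := r) (j := r + 1) (by exact Nat.lt_of_succ_lt hr) hr (by omega)
    show gam e κ n (s0 e κ ℓ n M t0) a.1 *
      (if nodeBelow (a.1 (r + 1)) (a.1 r) then 1 else rho e κ (a.1 r) (a.1 (r + 1))) =
      gam e κ n (s0 e κ ℓ n M t0) (sw r a.1) *
      (if nodeBelow (a.1 r) (a.1 (r + 1)) then 1 else rho e κ (a.1 (r + 1)) (a.1 r))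
    rcases nodeBelow_total _ _ hne with hb | hb
    · rw [if_neg (nodeBelow_asymm _ _ hb), if_pos hb, gam_sw _ _ _ _ _ _ hr hb, mul_one]
    · rw [if_pos hb, if_neg (nodeBelow_asymm _ _ hb), mul_one]
      have := gam_sw e κ n (s0 e κ ℓ n M t0) (sw r a.1) r hr (by rwa [sw_left, sw_right])
      rw [sw_sw, sw_left, sw_right] at this
      exact this
  · rintro ⟨t, ht⟩ hne
    have ht : IsStd n Λ t := ht
    have hne : t ≠ t0 := fun h => hne (Subtype.ext h)
    have hns : ¬ Sorted n t := fun h => hne (sorted_unique ht ht0 hs0 h)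
    unfold Sorted at hns
    push Not at hns
    obtain ⟨r, hr, hc⟩ := hns
    obtain ⟨g1, g2, g3⟩ := ht.descent hr hc
    exact ⟨r, hr, g2, if_pos g1, g3⟩
  · rintro ⟨t, ht⟩ r h hr
    have ht : IsStd n Λ t := ht
    have hr : r + 1 < n := hr
    show (inv n t).card ≤ (inv n (sw r t)).card + 1
    by_cases hc : nodeBelow (t r) (t (r + 1))
    · rw [inv_card t r hr hc]; omega
    · rw [(ht.descent hr hc).2.2]

end Thm1
end Paper

namespace Paper

section Final

variable {n ℓ : ℕ} {Λ : Set Node} {a : ℕ → Node}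

theorem degSeq_congr {M : ℕ} (hΛ : IsDiagramSet ℓ Λ) (hM : InBox M Λ) (e e' : ℕ) (κ κ' : ℕ → ℤ)
    (h : ∀ A ∈ Win ℓ M, ∀ C ∈ Win ℓ M,
      resNode e κ C = resNode e κ A ↔ resNode e' κ' C = resNode e' κ' A)
    (ha : IsStd n Λ a) : degSeq ℓ n e κ a = degSeq ℓ n e' κ' a := by
  unfold degSeq
  apply Finset.sum_congr rfl
  intro k hk
  have hk : k < n := by simpa using hk
  exact dNode_congr (ha.Sk_diag hΛ (k := k + 1) hk) (M := M)
      (fun A hA => hM A (ha.Sk_sub (k := k + 1) hk hA)) e e' κ κ' _ (h _ (mem_Win_of_mem hΛ hM _ (ha.mem k hk)))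

theorem sep_shift (e : ℕ) (he : 2 ≤ e) (κ : ℕ → ℤ) (M : ℕ) :
    Sep (fun l => κ l % e + e * (l * (2 * M + 7))) ℓ M := by
  have main : ∀ l l' : ℕ, l < l' →
      (κ l' % e + e * (l' * (2 * M + 7))) - (κ l % e + e * (l * (2 * M + 7))) > 2 * M + 5 := by
    intro l l' h
    have he0 : (0 : ℤ) < e := by omega
    have h1 := Int.emod_nonneg (κ l') he0.ne'
    have h2 := Int.emod_lt_of_pos (κ l) he0
    have h3 : (l : ℤ) + 1 ≤ l' := by omega
    obtain ⟨d, hd⟩ : ∃ d : ℕ, l' = l + 1 + d := ⟨l' - (l + 1), by omega⟩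
    subst hd
    push_cast
    have h4 : (0 : ℤ) ≤ e * (d * (2 * M + 7)) := by positivity
    have h5 : (2 : ℤ) * (2 * M + 6) ≤ e * (2 * M + 6) := by
      apply mul_le_mul_of_nonneg_right <;> [exact_mod_cast he; positivity]
    nlinarith
  intro l l' _ _ hne
  rcases Nat.lt_or_gt_of_ne hne with h | h
  · right; exact main l l' h
  · left; exact main l' l h

theorem thm2 (e : ℕ) (he : 2 ≤ e) (κ : ℕ → ℤ) {M : ℕ} [Fintype (Stds n Λ)]
    (hΛ : IsDiagramSet ℓ Λ) (hM : InBox M Λ) :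
    0 ≤ ∑ t : Stds n Λ, degSeq ℓ n e κ t.1 := by
  refine (thm1 (n := n) e he _ (sep_shift e he κ M) hΛ hM).trans_eq ?_
  apply Finset.sum_congr rfl
  intro t _
  apply degSeq_congr hΛ hM _ _ _ _ _ t.2
  have : ∀ A, resNode e (fun l => κ l % e + e * (l * (2 * M + 7))) A = resNode e κ A := by
    intro A
    simp [resNode, ZMod.intCast_mod]
  intro A _ C _
  rw [this, this]

theorem thm3 (e : ℕ) (he : e ≠ 1) (κ : ℕ → ℤ) {M : ℕ} [Fintype (Stds n Λ)]
    (hΛ : IsDiagramSet ℓ Λ) (hM : InBox M Λ) :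
    0 ≤ ∑ t : Stds n Λ, degSeq ℓ n e κ t.1 := by
  rcases Nat.lt_or_ge 1 e with h | h
  · exact thm2 e h κ hΛ hM
  obtain rfl : e = 0 := by omega
  obtain ⟨E, hE⟩ : ∃ E : ℕ, E = (∑ A ∈ Win ℓ M, |cont κ A|).toNat * 2 + 2 := ⟨_, rfl⟩
  refine (thm2 (n := n) E (by omega) κ hΛ hM).trans_eq ?_
  apply Finset.sum_congr rfl
  intro t _
  apply degSeq_congr hΛ hM _ _ _ _ _ t.2
  have hb : ∀ A ∈ Win ℓ M, |cont κ A| ≤ ∑ A ∈ Win ℓ M, |cont κ A| := fun A hA =>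
    Finset.single_le_sum (f := fun A => |cont κ A|) (fun _ _ => abs_nonneg _) hA
  intro A hA C hC
  have b1 := hb A hA
  have b2 := hb C hC
  rw [res_cont, res_cont, res_cont, res_cont, ZMod.intCast_eq_intCast_iff,
    ZMod.intCast_eq_intCast_iff]
  rw [Nat.cast_zero, Int.modEq_zero_iff]
  constructor
  · intro hm
    have hd := hm.dvd
    have : cont κ A - cont κ C = 0 := by
      apply Int.eq_zero_of_abs_lt_dvd hd
      have := abs_sub (cont κ A) (cont κ C)
      have h0 := abs_nonneg (cont κ A)
      omega
    omega
  · intro hm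
    rw [hm]

theorem Multipartition.box (μ : Multipartition ℓ n) : ∀ A ∈ μ.diagram, A.1 < ℓ ∧ A.2.1 < n ∧ A.2.2 < n := by
  rintro ⟨l, r, c⟩ h
  have h : c < μ.part l r := h
  have h1 : l < ℓ := by
    by_contra hc
    rw [μ.comp_bound l (by omega)] at h
    omega
  have h2 : r < n := by
    by_contra hc
    rw [μ.row_bound l r (by omega)] at h
    omega
  refine ⟨h1, h2, ?_⟩
  have e1 : μ.part l r ≤ ∑ r ∈ Finset.range n, μ.part l r :=
    Finset.single_le_sum (f := fun r => μ.part l r) (fun _ _ => Nat.zero_le _) (by simpa using h2)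
  have e2 : ∑ r ∈ Finset.range n, μ.part l r ≤ ∑ l ∈ Finset.range ℓ, ∑ r ∈ Finset.range n, μ.part l r :=
    Finset.single_le_sum (f := fun l => ∑ r ∈ Finset.range n, μ.part l r)
      (fun _ _ => Nat.zero_le _) (by simpa using h1)
  have := μ.size
  simp only
  omega

theorem Multipartition.isDiag (μ : Multipartition ℓ n) : IsDiagramSet ℓ μ.diagram := by
  refine ⟨(Win ℓ n).finite_toSet.subset ?_, fun A hA => (μ.box A hA).1, ?_, ?_⟩
  · rintro ⟨l, r, c⟩ h
    have := μ.box _ h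
    rw [Finset.mem_coe, mem_Win]
    simp only at this
    omega
  · intro l r c h
    have h : c + 1 < μ.part l r := h
    show c < μ.part l r
    omega
  · intro l r c h
    have h : c < μ.part l (r + 1) := h
    have := μ.antitone l (Nat.le_succ r)
    show c < μ.part l r
    simp only [Nat.succ_eq_add_one] at this
    omega

theorem Multipartition.inBox (μ : Multipartition ℓ n) : InBox n μ.diagram :=
  fun A hA => (μ.box A hA).2

namespace StdTableau

variable (T : StdTableau ℓ n)

theorem node_spec (k : ℕ) (h1 : 1 ≤ k) (h2 : k ≤ n) :
    T.node k ∈ T.shape.diagram ∧ T.entry (T.node k) = k := by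
  have : ∃ A ∈ T.shape.diagram, T.entry A = k := T.bijOn.surjOn ⟨h1, h2⟩
  exact ⟨Function.invFunOn_mem this, Function.invFunOn_eq this⟩

theorem entry_le (A : Node) (h : A ∈ T.shape.diagram) : 1 ≤ T.entry A ∧ T.entry A ≤ n :=
  T.bijOn.mapsTo h

theorem node_entry (A : Node) (h : A ∈ T.shape.diagram) : T.node (T.entry A) = A := by
  have h1 := T.entry_le A h
  have h2 := T.node_spec _ h1.1 h1.2
  exact T.bijOn.injOn h2.1 h h2.2

theorem entry_mono (A B : Node) (hB : B ∈ T.shape.diagram) (h : cle A B) : T.entry A ≤ T.entry B := by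
  obtain ⟨l, i, j⟩ := A
  obtain ⟨l', i', j'⟩ := B
  obtain ⟨h1, h2, h3⟩ := h
  simp only at h1 h2 h3
  subst h1
  have hd := T.shape.isDiag
  have e1 : T.entry (l, i', j) ≤ T.entry (l, i', j') := by
    clear h2
    induction j', h3 using Nat.le_induction with
    | base => exact le_rfl
    | succ m hm ih => exact (ih (hd.2.2.1 _ _ _ hB)).trans (T.row_inc _ _ _ hB).le
  have hB' : (l, i', j) ∈ T.shape.diagram := hd.down hB le_rfl h3
  have e2 : T.entry (l, i, j) ≤ T.entry (l, i', j) := by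
    clear e1 hB
    induction i', h2 using Nat.le_induction with
    | base => exact le_rfl
    | succ m hm ih => exact (ih (hd.2.2.2 _ _ _ hB')).trans (T.col_inc _ _ _ hB').le
  exact e2.trans e1

/-- The sequence of nodes of a tableau. -/
noncomputable def seq (k : ℕ) : Node := if k < n then T.node (k + 1) else (0, 0, 0)

theorem seq_lt {k : ℕ} (hk : k < n) : T.seq k = T.node (k + 1) := by simp [seq, hk]

theorem seq_spec {k : ℕ} (hk : k < n) : T.seq k ∈ T.shape.diagram ∧ T.entry (T.seq k) = k + 1 := by
  rw [T.seq_lt hk]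
  exact T.node_spec _ (by omega) (by omega)

theorem seq_entry (A : Node) (h : A ∈ T.shape.diagram) : T.seq (T.entry A - 1) = A := by
  have h1 := T.entry_le A h
  rw [T.seq_lt (by omega), Nat.sub_add_cancel h1.1, T.node_entry A h]

theorem seq_isStd : IsStd n T.shape.diagram T.seq where
  dflt i hi := by simp [seq, not_lt.mpr hi]
  inj i j hi hj h := by
    have h1 := (T.seq_spec hi).2
    have h2 := (T.seq_spec hj).2
    rw [h] at h1
    omega
  mem i hi := (T.seq_spec hi).1
  surj A hA := ⟨T.entry A - 1, by have := T.entry_le A hA; omega, T.seq_entry A hA⟩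
  ord i j hi hj h := by
    have h1 := (T.seq_spec hi).2
    have h2 := (T.seq_spec hj).2
    have := T.entry_mono _ _ (T.seq_spec hj).1 h
    omega

end StdTableau

theorem degE_seq' (T : StdTableau ℓ n) (e : ℕ) (κ : ℕ → ℤ) : degE e κ T = degSeq ℓ n e κ T.seq := by
  unfold degE degSeq
  refine (Finset.sum_bij (fun k _ => k + 1) ?_ ?_ ?_ ?_).symm
  · intro k hk; simp at hk ⊢; omega
  · intro k _ k' _ h; omega
  · intro m hm
    simp at hm
    exact ⟨m - 1, by simp; omega, by omega⟩
  · intro k hk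
    have hk : k < n := by simpa using hk
    rw [T.seq_lt hk]
    congr 1
    ext A
    constructor
    · rintro ⟨i, hi, rfl⟩
      have := T.seq_spec (k := i) (by omega)
      exact ⟨this.1, by omega⟩
    · rintro ⟨h1, h2⟩
      exact ⟨T.entry A - 1, by have := T.entry_le A h1; omega, T.seq_entry A h1⟩

theorem seq_inj (T T' : StdTableau ℓ n) (hs : T.shape = T'.shape) (h : T.seq = T'.seq) : T = T' := by
  have he : T.entry = T'.entry := by
    funext A
    by_cases hA : A ∈ T.shape.diagram
    · have h1 := T.seq_entry A hA
      have h2 := T.entry_le A hA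
      have h3 := (T'.seq_spec (k := T.entry A - 1) (by omega)).2
      rw [← h, h1] at h3
      omega
    · rw [T.entry_zero A hA, T'.entry_zero A (hs ▸ hA)]
  cases T
  cases T'
  simp only at hs he
  subst hs he
  rfl

theorem seq_surj (μ : Multipartition ℓ n) (a : ℕ → Node) (ha : IsStd n μ.diagram a) :
    ∃ T : StdTableau ℓ n, T.shape = μ ∧ T.seq = a := by
  choose g hg1 hg2 using ha.surj
  have hd := μ.isDiag
  have hlt : ∀ A (hA : A ∈ μ.diagram) B (hB : B ∈ μ.diagram), cle A B → A ≠ B → g A hA < g B hB := by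
    intro A hA B hB h hne
    have := ha.ord (g A hA) (g B hB) (hg1 _ _) (hg1 _ _) (by rwa [hg2, hg2])
    refine lt_of_le_of_ne this fun h => hne ?_
    rw [← hg2 A hA, ← hg2 B hB, h]
  let T : StdTableau ℓ n :=
    { shape := μ
      entry := fun A => if h : A ∈ μ.diagram then g A h + 1 else 0
      entry_zero := fun A hA => by simp [hA]
      bijOn := by
        refine ⟨?_, ?_, ?_⟩
        · intro A hA
          have := hg1 A hA
          simp only [hA, dif_pos, Set.mem_Icc]
          omega
        · intro A hA B hB h
          simp only [hA, hB, dif_pos] at h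
          rw [← hg2 A hA, ← hg2 B hB]
          congr 1
          omega
        · intro k hk
          obtain ⟨h1, h2⟩ := hk
          have hm := ha.mem (k - 1) (by omega)
          refine ⟨a (k - 1), hm, ?_⟩
          simp only [hm, dif_pos]
          have := ha.inj _ _ (hg1 _ hm) (by omega) (hg2 _ hm)
          omega
      row_inc := by
        intro l r c h
        have h' := hd.2.2.1 _ _ _ h
        simp only [h, h', dif_pos]
        have := hlt _ h' _ h (by simp [cle]) (by simp)
        omega
      col_inc := by
        intro l r c h
        have h' := hd.2.2.2 _ _ _ h
        simp only [h, h', dif_pos]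
        have := hlt _ h' _ h (by simp [cle]) (by simp)
        omega }
  refine ⟨T, rfl, ?_⟩
  funext k
  by_cases hk : k < n
  · have h1 := T.seq_spec hk
    have hm : T.seq k ∈ μ.diagram := h1.1
    have h2 : T.entry (T.seq k) = g _ hm + 1 := dif_pos hm
    have h3 : g _ hm = k := by omega
    have h4 := hg2 _ hm
    rw [h3] at h4
    exact h4.symm
  · rw [ha.dflt k (by omega)]
    simp [StdTableau.seq, hk]

theorem degSum_nonneg (n ℓ : ℕ) (κ : ℕ → ℤ) (μ : Multipartition ℓ n) (e : ℕ) (he : e ≠ 1) :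
    0 ≤ ∑ᶠ T : {T : StdTableau ℓ n // T.shape = μ}, degE e κ T.1 := by
  have : Finite (Stds n μ.diagram) := Stds_finite μ.isDiag.1
  have : Fintype (Stds n μ.diagram) := Fintype.ofFinite _
  have key := finsum_eq_of_bijective
    (f := fun T : {T : StdTableau ℓ n // T.shape = μ} => degE e κ T.1)
    (g := fun a : Stds n μ.diagram => degSeq ℓ n e κ a.1)
    (fun T => ⟨T.1.seq, by
      have := T.1.seq_isStd
      rw [T.2] at this
      exact this⟩)
    ⟨fun T T' h => Subtype.ext (seq_inj _ _ (T.2.trans T'.2.symm) (congrArg Subtype.val h)),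
     fun a => by
      obtain ⟨T, h1, h2⟩ := seq_surj μ a.1 a.2
      exact ⟨⟨T, h1⟩, Subtype.ext h2⟩⟩
    (fun T => degE_seq' T.1 e κ)
  rw [key, finsum_eq_sum_of_fintype]
  exact thm3 e he κ μ.isDiag μ.inBox

end Final

/-- `deg_e(λ) = Σ_{T ∈ Std(λ)} deg_e(T) ≥ 0` for every
`e ∈ {0, 2, 3, 4, …}`, and `Deg_p(λ) = Σ_{k ≥ 1} deg_{p^k}(λ) ≥ 0` for every prime `p`. -/
theorem deg_nonneg (n ℓ : ℕ) (hℓ : 1 ≤ ℓ) (κ : ℕ → ℤ) (μ : Multipartition ℓ n) :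
    (∀ e : ℕ, e ≠ 1 →
      0 ≤ ∑ᶠ T : {T : StdTableau ℓ n // T.shape = μ}, degE e κ T.1) ∧
    ∀ p : ℕ, p.Prime →
      0 ≤ ∑ᶠ (k : ℕ) (_ : 1 ≤ k),
            ∑ᶠ T : {T : StdTableau ℓ n // T.shape = μ}, degE (p ^ k) κ T.1 := by
  refine ⟨fun e he => degSum_nonneg n ℓ κ μ e he, fun p hp => ?_⟩
  apply finsum_nonneg
  intro k
  apply finsum_nonneg
  intro hk
  apply degSum_nonneg n ℓ κ μ
  have h2 := hp.two_le
  have := Nat.one_lt_pow (n := k) (by omega) (by omega : 1 < p)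
  omega

end Paper
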